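/- arXiv:1610.00570 — 5 statements merged into one kernel-verified Lean document; each statement's English description precedes it below -/
import Mathlib

section
/- If R is a relative m-ovoid of Q⁻(2n+1,q) with respect to 𝒬, then |R| = m·q·(qⁿ − 1). -/
noncomputable section

open Module

variable {F V : Type*} [Field F] [AddCommGroup V] [Module F V]

/-- `P` is a singular point of the quadratic form `Q`, i.e. a `1`-dimensional subspace
spanned by a nonzero singular vector. -/
def IsSingularPoint (Q : QuadraticForm F V) (P : Submodule F V) : Prop :=
  ∃ v : V, v ≠ 0 ∧ Q v = 0 ∧ P = Submodule.span F {v}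

/-- A subspace is totally singular if `Q` vanishes identically on it. -/
def TotallySingular (Q : QuadraticForm F V) (W : Submodule F V) : Prop :=
  ∀ v ∈ W, Q v = 0

/-- A generator is a totally singular subspace of (vector space) dimension `n`. -/
def IsGenerator (Q : QuadraticForm F V) (n : ℕ) (g : Submodule F V) : Prop :=
  TotallySingular Q g ∧ finrank F g = n

/-- The restriction of `Q` to the subspace `U` is nondegenerate. -/
def NondegOn (Q : QuadraticForm F V) (U : Submodule F V) : Prop :=
  ∀ v ∈ U, Q v = 0 → (∀ w ∈ U, QuadraticMap.polar (⇑Q) v w = 0) → v = 0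

/-- The quadratic form `Q` is nondegenerate. -/
def Nondeg (Q : QuadraticForm F V) : Prop :=
  ∀ v : V, Q v = 0 → (∀ w : V, QuadraticMap.polar (⇑Q) v w = 0) → v = 0

/-- `Q` has Witt index `n`: every totally singular subspace has dimension at most `n`
and some totally singular subspace has dimension `n`. -/
def HasWittIndex (Q : QuadraticForm F V) (n : ℕ) : Prop :=
  (∀ W : Submodule F V, TotallySingular Q W → finrank F W ≤ n) ∧
  ∃ W : Submodule F V, TotallySingular Q W ∧ finrank F W = n

/-- A relative `m`-ovoid with respect to the parabolic section cut out by the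
hyperplane `H`: a set `R` of singular points not contained in `H` such that every
generator not contained in `H` contains exactly `m` points of `R`. -/
def IsRelativeMOvoid (Q : QuadraticForm F V) (n : ℕ) (H : Submodule F V) (m : ℕ)
    (R : Set (Submodule F V)) : Prop :=
  (∀ P ∈ R, IsSingularPoint Q P ∧ ¬ P ≤ H) ∧
  ∀ g : Submodule F V, IsGenerator Q n g → ¬ g ≤ H → {P ∈ R | P ≤ g}.ncard = m

theorem hlp_Q_add (Q : QuadraticForm F V) (x y : V) :
    Q (x + y) = Q x + Q y + QuadraticMap.polar Q x y := QuadraticMap.map_add Q x y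

theorem hlp_sup (Q : QuadraticForm F V) (W : Submodule F V) (hW : TotallySingular Q W) (d : V)
    (hd : Q d = 0) (hp : ∀ w ∈ W, QuadraticMap.polar Q w d = 0) :
    TotallySingular Q (W ⊔ Submodule.span F {d}) := by
  intro v hv
  obtain ⟨w, hw, z, hz, rfl⟩ := Submodule.mem_sup.1 hv
  obtain ⟨a, rfl⟩ := Submodule.mem_span_singleton.1 hz
  rw [hlp_Q_add, hW w hw, QuadraticMap.map_smul, hd, QuadraticMap.polar_smul_right, hp w hw]
  simp

theorem hlp_lt (W : Submodule F V) [FiniteDimensional F V] (d : V) (hd : d ∉ W) :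
    finrank F W < finrank F (W ⊔ Submodule.span F {d} : Submodule F V) := by
  apply Submodule.finrank_lt_finrank_of_lt
  refine lt_of_le_of_ne le_sup_left fun h => hd ?_
  rw [h]
  exact Submodule.mem_sup_right (Submodule.mem_span_singleton_self d)

theorem hlp_iso [Fintype F] (Q : QuadraticForm F V) (A : Submodule F V)
    (hA : 3 ≤ finrank F A) : ∃ d ∈ A, d ≠ 0 ∧ Q d = 0 := by
  classical
  obtain ⟨f, hf⟩ := exists_linearIndependent_of_le_finrank hA
  obtain ⟨p, hp⟩ := CharP.exists F
  have hpp : p.Prime := CharP.char_is_prime F p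
  let P : MvPolynomial (Fin 3) F :=
    ∑ i : Fin 3, ∑ j : Fin 3, MvPolynomial.C (if i = j then Q (f i) else
      if i < j then QuadraticMap.polar Q (f i : V) (f j) else 0) *
      (MvPolynomial.X i * MvPolynomial.X j)
  have hdeg : P.totalDegree < Fintype.card (Fin 3) := by
    have : P.totalDegree ≤ 2 := by
      refine MvPolynomial.totalDegree_finsetSum_le fun i _ => ?_
      refine MvPolynomial.totalDegree_finsetSum_le fun j _ => ?_
      refine (MvPolynomial.totalDegree_mul _ _).trans ?_
      have := MvPolynomial.totalDegree_mul (MvPolynomial.X i : MvPolynomial (Fin 3) F)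
        (MvPolynomial.X j)
      simp only [MvPolynomial.totalDegree_C, MvPolynomial.totalDegree_X] at *
      omega
    simp; omega
  have hev : ∀ x : Fin 3 → F, MvPolynomial.eval x P = Q ((∑ i, x i • f i : A) : V) := by
    intro x
    simp only [P, map_sum, map_mul, MvPolynomial.eval_C, MvPolynomial.eval_X, Fin.sum_univ_three]
    simp [hlp_Q_add, QuadraticMap.map_smul, QuadraticMap.polar_add_left]
    ring
  have hdvd := char_dvd_card_solutions p hdeg
  have h0 : MvPolynomial.eval (0 : Fin 3 → F) P = 0 := by rw [hev]; simp
  have h1 : 1 < Fintype.card {x : Fin 3 → F // MvPolynomial.eval x P = 0} := by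
    have : 0 < Fintype.card {x : Fin 3 → F // MvPolynomial.eval x P = 0} :=
      Fintype.card_pos_iff.2 ⟨⟨0, h0⟩⟩
    exact lt_of_lt_of_le hpp.one_lt (Nat.le_of_dvd this hdvd)
  obtain ⟨⟨x, hx⟩, hne⟩ := Fintype.exists_ne_of_one_lt_card h1 ⟨0, h0⟩
  refine ⟨_, (∑ i, x i • f i : A).2, ?_, (hev x).symm.trans hx⟩
  intro h
  apply hne
  have h2 : (∑ i, x i • f i : A) = 0 := Subtype.ext h
  have := Fintype.linearIndependent_iff.1 hf x h2
  exact Subtype.ext (funext this)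

theorem hlp_refl (Q : QuadraticForm F V) : LinearMap.BilinForm.IsRefl Q.polarBilin := by
  intro x y h
  simpa [QuadraticMap.polar_comm] using h

theorem hlp_mem_orth (Q : QuadraticForm F V) (W : Submodule F V) (v : V) :
    v ∈ LinearMap.BilinForm.orthogonal Q.polarBilin W ↔
      ∀ w ∈ W, QuadraticMap.polar Q w v = 0 := Iff.rfl

theorem hlp_gen [Fintype F] [FiniteDimensional F V] (n : ℕ) (hn : 2 ≤ n)
    (hV : finrank F V = 2 * n + 2)
    (Q : QuadraticForm F V) (hQw : HasWittIndex Q n)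
    (H : Submodule F V) (hH : finrank F H = 2 * n + 1) :
    ∃ W : Submodule F V, W ≤ H ∧ TotallySingular Q W ∧ finrank F W = n := by
  obtain ⟨hmax, W, hW, hWn⟩ := hQw
  by_cases hWH : W ≤ H
  · exact ⟨W, hWH, hW, hWn⟩
  set W0 := W ⊓ H with hW0
  have h1 := Submodule.finrank_sup_add_finrank_inf_eq W H
  rw [← hW0] at h1
  have h2 := Submodule.finrank_le (W ⊔ H)
  have h3 : finrank F W0 < finrank F W := by
    apply Submodule.finrank_lt_finrank_of_lt
    exact lt_of_le_of_ne inf_le_left fun h => hWH (inf_eq_left.1 h)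
  have h4 := LinearMap.BilinForm.finrank_add_finrank_orthogonal (hlp_refl Q) W0
  set O := LinearMap.BilinForm.orthogonal Q.polarBilin W0
  obtain ⟨C, hC⟩ := Submodule.exists_isCompl W0
  have h5 := Submodule.finrank_add_eq_of_isCompl hC
  have h6 := Submodule.finrank_sup_add_finrank_inf_eq H O
  have h7 := Submodule.finrank_le (H ⊔ O)
  have h8 := Submodule.finrank_sup_add_finrank_inf_eq C (H ⊓ O)
  have h9 := Submodule.finrank_le (C ⊔ (H ⊓ O))
  obtain ⟨d, hd, hd0, hQd⟩ := hlp_iso Q (C ⊓ (H ⊓ O)) (by omega)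
  have hts : TotallySingular Q (W0 ⊔ Submodule.span F {d}) :=
    hlp_sup Q W0 (fun v hv => hW v hv.1) d hQd ((hlp_mem_orth Q W0 d).1 hd.2.2)
  refine ⟨W0 ⊔ Submodule.span F {d}, ?_, hts, ?_⟩
  · refine sup_le inf_le_right ?_
    rw [Submodule.span_singleton_le_iff_mem]
    exact hd.2.1
  · have := hmax _ hts
    have := hlp_lt W0 d (fun h => hd0 (Submodule.disjoint_def.1 hC.disjoint d h hd.1))
    omega

theorem hlp_fiber [Fintype F] [Fintype V] [DecidableEq F] (f : V →ₗ[F] F) (hf : f ≠ 0) (c : F) :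
    Fintype.card F * (Finset.univ.filter fun v => f v = c).card = Fintype.card V := by
  have hs : Function.Surjective f := LinearMap.surjective hf
  have h := Finset.card_eq_sum_card_fiberwise (f := f) (s := (Finset.univ : Finset V))
    (t := Finset.univ) (by simp)
  rw [Finset.sum_congr rfl (g := fun _ => (Finset.univ.filter fun v => f v = c).card)] at h
  · simpa using h.symm
  · intro x _
    exact AddMonoidHom.card_fiber_eq_of_mem_range f (hs x) (hs c)

theorem hlp_count [Fintype F] [Fintype V] (Q : QuadraticForm F V) (hQ : Nondeg Q)
    (W : Submodule F V) (hW : TotallySingular Q W) (N n : ℕ) (hN : finrank F V = N + n)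
    (hn : finrank F W = n)
    (hmax : ∀ v, Q v = 0 → (∀ w ∈ W, QuadraticMap.polar Q w v = 0) → v ∈ W) :
    Fintype.card F * Nat.card {v : V // Q v = 0} + Fintype.card F ^ N
      = Fintype.card F ^ (N + n) + Fintype.card F ^ (n + 1) := by
  classical
  set q := Fintype.card F
  set O := LinearMap.BilinForm.orthogonal Q.polarBilin W with hO
  have h4 := LinearMap.BilinForm.finrank_add_finrank_orthogonal (hlp_refl Q) W
  have hbot : W ⊓ LinearMap.BilinForm.orthogonal Q.polarBilin ⊤ = ⊥ := by
    rw [eq_bot_iff]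
    rintro v ⟨hv, hv'⟩
    refine hQ v (hW v hv) fun w => ?_
    rw [QuadraticMap.polar_comm]
    exact hv' w trivial
  rw [hbot, finrank_bot, ← hO] at h4
  have hcV : Fintype.card V = q ^ (N + n) := by rw [Module.card_eq_pow_finrank (K := F), hN]
  have hcW : Fintype.card W = q ^ n := by rw [Module.card_eq_pow_finrank (K := F), hn]
  have hcO : Fintype.card O = q ^ N := by
    rw [Module.card_eq_pow_finrank (K := F)]; congr 1; omega
  have key : ∑ v : V, q * (Finset.univ.filter fun w : W => Q (v + w) = 0).card
      = q * (Fintype.card W * Nat.card {v : V // Q v = 0}) := by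
    rw [← Finset.mul_sum]
    congr 1
    simp only [Finset.card_filter]
    rw [Finset.sum_comm]
    rw [Finset.sum_congr rfl (g := fun _ => Nat.card {v : V // Q v = 0})]
    · simp
    · intro w _
      rw [← Finset.card_filter, Nat.card_eq_fintype_card, Fintype.card_subtype]
      exact Finset.card_equiv (Equiv.addRight (w : V)) (by simp)
  have hterm : ∀ v : V, q * (Finset.univ.filter fun w : W => Q (v + w) = 0).card
      + (if v ∈ O then Fintype.card W else 0)
      = Fintype.card W + (if v ∈ W then q * Fintype.card W else 0) := by
    intro v
    have hexp : ∀ w : W, Q (v + w) = Q v + QuadraticMap.polar Q w v := by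
      intro w
      rw [hlp_Q_add, hW w w.2, QuadraticMap.polar_comm]; simp
    simp only [hexp]
    by_cases hv : v ∈ O
    · have hz : ∀ w : W, QuadraticMap.polar Q w v = 0 := fun w => (hlp_mem_orth Q W v).1 hv w w.2
      simp only [hz, add_zero, hv, if_true]
      by_cases hq : Q v = 0
      · have : v ∈ W := hmax v hq ((hlp_mem_orth Q W v).1 hv)
        simp [hq, this]; ring
      · have : v ∉ W := fun h => hq (hW v h)
        simp [hq, this]
    · have hvW : v ∉ W := by
        intro h
        apply hv
        rw [hO, hlp_mem_orth]
        intro w hw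
        have := hlp_Q_add Q w v
        rw [hW _ hw, hW _ h, hW _ (W.add_mem hw h)] at this
        simpa using this.symm
      simp only [hv, hvW, if_false, add_zero]
      let f : W →ₗ[F] F := (Q.polarBilin.flip v).comp W.subtype
      have hf : f ≠ 0 := by
        intro h
        apply hv
        rw [hO, hlp_mem_orth]
        intro w hw
        exact LinearMap.congr_fun h ⟨w, hw⟩
      have := hlp_fiber f hf (- Q v)
      rw [← this]
      congr 2
      ext w
      simp only [Finset.mem_filter, Finset.mem_univ, true_and]
      rw [eq_neg_iff_add_eq_zero, add_comm]
      rfl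
  have hsum := Finset.sum_congr (rfl : (Finset.univ : Finset V) = Finset.univ) fun v _ => hterm v
  rw [Finset.sum_add_distrib, key, Finset.sum_add_distrib] at hsum
  rw [← Finset.sum_filter, ← Finset.sum_filter, Finset.sum_const, Finset.sum_const,
    Finset.sum_const, Finset.card_univ, ← Fintype.card_subtype, ← Fintype.card_subtype] at hsum
  have hsum' : q * (Fintype.card W * Nat.card {v : V // Q v = 0}) + Fintype.card O * Fintype.card W
    = Fintype.card V * Fintype.card W + Fintype.card W * (q * Fintype.card W) := by
    simpa using hsum
  rw [hcO, hcW, hcV] at hsum'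
  have hqpos : 0 < q ^ n := pow_pos Fintype.card_pos n
  apply Nat.eq_of_mul_eq_mul_left hqpos
  rw [pow_succ q n]
  linarith

/-- Number of generators through a vector. -/
def hlpNum (Q : QuadraticForm F V) (n : ℕ) (v : V) : ℕ :=
  Nat.card {g : Submodule F V // IsGenerator Q n g ∧ v ∈ g}

theorem hlp_num_le [Finite V] (Q : QuadraticForm F V) (n : ℕ) (u v : V) (hu : Q u = 0)
    (hv : Q v = 0) (huv : QuadraticMap.polar Q u v ≠ 0) : hlpNum Q n u ≤ hlpNum Q n v := by
  classical
  haveI : Finite (Submodule F V) := Finite.of_injective _ SetLike.coe_injective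
  set w := u - v with hw
  have hQw : Q w = - QuadraticMap.polar Q u v := by
    rw [hw, sub_eq_add_neg, hlp_Q_add, QuadraticMap.polar_neg_right]
    simp [hu, hv]
  have hQw0 : Q w ≠ 0 := by rw [hQw]; simpa using huv
  let f : Module.Dual F V := (Q w)⁻¹ • Q.polarBilin w
  have hfx : ∀ x, f x = (Q w)⁻¹ * QuadraticMap.polar Q w x := fun x => rfl
  have hf : f w = 2 := by
    rw [hfx, QuadraticMap.polar_self]
    field_simp
    simp [mul_comm]
  let s := Module.reflection hf
  have hs : ∀ x, s x = x - f x • w := fun x => Module.reflection_apply x hf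
  have hsQ : ∀ x, Q (s x) = Q x := by
    intro x
    rw [hs, sub_eq_add_neg, ← neg_smul, hlp_Q_add, QuadraticMap.map_smul,
      QuadraticMap.polar_smul_right, QuadraticMap.polar_comm _ x w, hfx]
    simp only [smul_eq_mul]
    field_simp
    ring
  have hsu : s u = v := by
    have : f u = 1 := by
      rw [hfx, hQw, hw, sub_eq_add_neg, QuadraticMap.polar_add_left, QuadraticMap.polar_neg_left,
        QuadraticMap.polar_self, hu, QuadraticMap.polar_comm _ v u]
      field_simp
      simp
    rw [hs, this, hw]; simp
  refine Nat.card_le_card_of_injective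
    (fun g => ⟨g.1.map (s : V →ₗ[F] V), ⟨?_, ?_⟩, ?_⟩) ?_
  · rintro _ ⟨x, hx, rfl⟩
    exact (hsQ x).trans (g.2.1.1 x hx)
  · exact (LinearEquiv.finrank_map_eq s g.1).trans g.2.1.2
  · exact ⟨u, g.2.2, hsu⟩
  · intro g g' h
    apply Subtype.ext
    exact Submodule.map_injective_of_injective s.injective (congrArg Subtype.val h)

theorem hlp_num_eq [Finite V] (Q : QuadraticForm F V) (hQ : Nondeg Q) (n : ℕ) (u v : V)
    (hu : Q u = 0) (hv : Q v = 0) (hu0 : u ≠ 0) (hv0 : v ≠ 0) :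
    hlpNum Q n u = hlpNum Q n v := by
  have key : ∀ u v : V, Q u = 0 → Q v = 0 → QuadraticMap.polar Q u v ≠ 0 →
      hlpNum Q n u = hlpNum Q n v := fun u v hu hv h =>
    le_antisymm (hlp_num_le Q n u v hu hv h)
      (hlp_num_le Q n v u hv hu (by rwa [QuadraticMap.polar_comm]))
  by_cases huv : QuadraticMap.polar Q u v = 0
  · obtain ⟨w1, h1⟩ : ∃ w, QuadraticMap.polar Q u w ≠ 0 := by
      by_contra! h; exact hu0 (hQ u hu h)
    obtain ⟨w2, h2⟩ : ∃ w, QuadraticMap.polar Q v w ≠ 0 := by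
      by_contra! h; exact hv0 (hQ v hv h)
    obtain ⟨w, hw1, hw2⟩ : ∃ w, QuadraticMap.polar Q u w ≠ 0 ∧ QuadraticMap.polar Q v w ≠ 0 := by
      by_cases h3 : QuadraticMap.polar Q v w1 = 0
      · by_cases h4 : QuadraticMap.polar Q u w2 = 0
        · exact ⟨w1 + w2, by simpa [QuadraticMap.polar_add_right, h4] using h1,
            by simpa [QuadraticMap.polar_add_right, h3] using h2⟩
        · exact ⟨w2, h4, h2⟩
      · exact ⟨w1, h1, h3⟩
    set t := - Q w / QuadraticMap.polar Q u w with ht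
    have hz : Q (w + t • u) = 0 := by
      rw [hlp_Q_add, QuadraticMap.map_smul, hu, QuadraticMap.polar_smul_right,
        QuadraticMap.polar_comm _ w u, ht]
      simp only [smul_eq_mul]
      field_simp
      ring
    have hzu : QuadraticMap.polar Q u (w + t • u) ≠ 0 := by
      rw [QuadraticMap.polar_add_right, QuadraticMap.polar_smul_right, QuadraticMap.polar_self, hu]
      simpa using hw1
    have hzv : QuadraticMap.polar Q v (w + t • u) ≠ 0 := by
      rw [QuadraticMap.polar_add_right, QuadraticMap.polar_smul_right,
        QuadraticMap.polar_comm _ v u, huv]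
      simpa using hw2
    rw [key u _ hu hz hzu, key v _ hv hz hzv]
  · exact key u v hu hv huv

open Classical in
theorem hlp_pts [Fintype F] [Fintype V] (T : Finset (Submodule F V))
    (hT : ∀ P ∈ T, finrank F P = 1) :
    (Finset.univ.filter fun v : V => v ≠ 0 ∧ Submodule.span F {v} ∈ T).card
      = T.card * (Fintype.card F - 1) := by
  rw [Finset.card_eq_sum_card_fiberwise (f := fun v => Submodule.span F {v}) (t := T)]
  · rw [Finset.sum_const_nat]
    intro P hP
    have h1 : (Finset.univ.filter fun v : V => v ∈ P).card = Fintype.card F := by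
      rw [← Fintype.card_subtype]
      have := Module.card_eq_pow_finrank (K := F) (V := P)
      rw [hT P hP, pow_one] at this
      exact this
    rw [← h1, ← Finset.card_erase_of_mem (s := Finset.univ.filter fun v : V => v ∈ P) (a := 0)
      (by simp)]
    congr 1
    ext v
    simp only [Finset.mem_filter, Finset.mem_univ, true_and, Finset.mem_erase]
    constructor
    · rintro ⟨⟨h0, _⟩, rfl⟩
      exact ⟨h0, Submodule.mem_span_singleton_self v⟩
    · rintro ⟨h0, hv⟩
      have : Submodule.span F {v} = P := by
        apply Submodule.eq_of_le_of_finrank_eq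
        · rwa [Submodule.span_singleton_le_iff_mem]
        · rw [finrank_span_singleton h0, hT P hP]
      exact ⟨⟨h0, this ▸ hP⟩, this⟩
  · intro v hv
    simp at hv
    exact hv.2

theorem hlp_aff [Fintype F] [Fintype V] (n : ℕ) (hn : 2 ≤ n)
    (hV : finrank F V = 2 * n + 2)
    (Q : QuadraticForm F V) (hQnd : Nondeg Q) (hQw : HasWittIndex Q n)
    (H : Submodule F V) (hH : finrank F H = 2 * n + 1) (hHnd : NondegOn Q H) :
    Nat.card {v : V // Q v = 0 ∧ v ∉ H} + Fintype.card F ^ (2 * n) + Fintype.card F ^ (n + 1)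
      = Fintype.card F ^ (2 * n + 1) + Fintype.card F ^ n := by
  classical
  have hmaxx : ∀ W : Submodule F V, TotallySingular Q W → finrank F W = n →
      ∀ v, Q v = 0 → (∀ w ∈ W, QuadraticMap.polar Q w v = 0) → v ∈ W := by
    intro W hW hWn v hv hp
    by_contra h
    have h1 := hlp_lt W v h
    have h2 := hQw.1 _ (hlp_sup Q W hW v hv hp)
    omega
  obtain ⟨W, hWH, hW, hWn⟩ := hlp_gen n hn hV Q hQw H hH
  have c1 := hlp_count Q hQnd W hW (n + 2) n (by omega) hWn (hmaxx W hW hWn)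
  have c2 := hlp_count (V := H) (Q.comp H.subtype)
    (fun v hv hp => Subtype.ext (hHnd v v.2 hv fun w hw => hp ⟨w, hw⟩))
    (W.comap H.subtype) (fun v hv => hW v hv) (n + 1) n (by omega)
    (by rw [← hWn]; exact (Submodule.comapSubtypeEquivOfLe hWH).finrank_eq)
    (fun v hv hp => hmaxx W hW hWn v hv fun w hw => hp ⟨w, hWH hw⟩ hw)
  have c3 : Nat.card {v : V // Q v = 0} = Nat.card {v : V // Q v = 0 ∧ v ∉ H}
      + Nat.card {v : H // (Q.comp H.subtype) v = 0} := by
    have e : Nat.card {v : H // (Q.comp H.subtype) v = 0} =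
        Nat.card {v : V // Q v = 0 ∧ v ∈ H} := by
      apply Nat.card_congr
      exact ⟨fun v => ⟨v.1.1, v.2, v.1.2⟩, fun v => ⟨⟨v.1, v.2.2⟩, v.2.1⟩, fun _ => rfl,
        fun _ => rfl⟩
    rw [e]
    simp only [Nat.card_eq_fintype_card, Fintype.card_subtype]
    rw [← Finset.card_filter_add_card_filter_not (s := Finset.univ.filter fun v => Q v = 0)
      (fun v => v ∉ H)]
    simp [Finset.filter_filter]
  rw [c3] at c1
  set q := Fintype.card F
  have hq : 0 < q := Fintype.card_pos
  apply Nat.eq_of_mul_eq_mul_left hq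
  have e1 : q ^ (n + 2 + n) = q * q ^ (2 * n + 1) := by ring
  have e2 : q ^ (n + 1 + n) = q * q ^ (2 * n) := by ring
  have e3 : q ^ (n + 2) = q * q ^ (n + 1) := by ring
  have e4 : q ^ (n + 1) = q * q ^ n := by ring
  rw [e1, e3] at c1
  rw [e2] at c2
  rw [mul_add] at c1
  rw [mul_add, mul_add, mul_add]
  omega

open Classical in
/-- Double counting of pairs (vector, generator). -/
theorem hlp_dc [Fintype V] [Fintype (Submodule F V)] (Q : QuadraticForm F V) (n : ℕ)
    (H : Submodule F V) (X : Finset V) (hX : ∀ v ∈ X, v ∉ H) (N c : ℕ)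
    (hN : ∀ v ∈ X, hlpNum Q n v = N)
    (hc : ∀ g : Submodule F V, IsGenerator Q n g → ¬ g ≤ H → (X.filter fun v => v ∈ g).card = c) :
    X.card * N =
      (Finset.univ.filter fun g : Submodule F V => IsGenerator Q n g ∧ ¬ g ≤ H).card * c := by
  have h := Finset.sum_card_bipartiteAbove_eq_sum_card_bipartiteBelow
    (fun (v : V) (g : Submodule F V) => v ∈ g) (s := X)
    (t := Finset.univ.filter fun g : Submodule F V => IsGenerator Q n g ∧ ¬ g ≤ H)
  rw [Finset.sum_const_nat (m := N), Finset.sum_const_nat (m := c)] at h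
  · exact h
  · intro g hg
    simp only [Finset.mem_filter, Finset.mem_univ, true_and] at hg
    exact hc g hg.1 hg.2
  · intro v hv
    rw [← hN v hv, hlpNum, Nat.card_eq_fintype_card, Fintype.card_subtype,
      Finset.bipartiteAbove, Finset.filter_filter]
    congr 1
    ext g
    simp only [Finset.mem_filter, Finset.mem_univ, true_and]
    constructor
    · rintro ⟨⟨a, _⟩, b⟩
      exact ⟨a, b⟩
    · rintro ⟨a, b⟩
      exact ⟨⟨a, fun h => hX v hv (h b)⟩, b⟩

/-- A relative `m`-ovoid of `Q⁻(2n+1,q)` has size `m·q·(qⁿ − 1)`. -/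
theorem statement_1
    (q n : ℕ) [Fintype F] (hq : Fintype.card F = q) (hn : 2 ≤ n)
    (hV : finrank F V = 2 * n + 2)
    (Q : QuadraticForm F V) (hQnd : Nondeg Q) (hQw : HasWittIndex Q n)
    (H : Submodule F V) (hH : finrank F H = 2 * n + 1) (hHnd : NondegOn Q H)
    (m : ℕ) (R : Set (Submodule F V)) (hR : IsRelativeMOvoid Q n H m R) :
    R.ncard = m * q * (q ^ n - 1) := by
  classical
  haveI : FiniteDimensional F V := Module.finite_of_finrank_pos (by omega)
  haveI : Finite V := Module.finite_of_finite F
  haveI : Fintype V := Fintype.ofFinite V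
  haveI : Finite (Submodule F V) := Finite.of_injective _ SetLike.coe_injective
  haveI : Fintype (Submodule F V) := Fintype.ofFinite _
  have hq1 : 1 < q := hq ▸ Fintype.one_lt_card
  obtain ⟨W, hW, hWn⟩ := hQw.2
  obtain ⟨w, hwW, hw0⟩ : ∃ w ∈ W, w ≠ 0 := by
    apply Submodule.exists_mem_ne_zero_of_ne_bot
    rintro rfl
    simp at hWn
    omega
  set N := hlpNum Q n w with hNdef
  have hN : ∀ v, Q v = 0 → v ∉ H → hlpNum Q n v = N := fun v hv hvH =>
    hlp_num_eq Q hQnd n v w hv (hW w hwW) (fun h => hvH (h ▸ H.zero_mem)) hw0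
  have hNpos : 0 < N := by
    rw [hNdef, hlpNum, Nat.card_pos_iff]
    exact ⟨⟨⟨W, ⟨hW, hWn⟩, hwW⟩⟩, inferInstance⟩
  have hR1 : ∀ P ∈ R, finrank F P = 1 := by
    intro P hP
    obtain ⟨⟨v, hv, _, rfl⟩, _⟩ := hR.1 P hP
    exact finrank_span_singleton hv
  have hRv : ∀ v, v ≠ 0 → Submodule.span F {v} ∈ R → Q v = 0 ∧ v ∉ H := by
    intro v hv hvR
    obtain ⟨⟨u, hu, hQu, he⟩, hle⟩ := hR.1 _ hvR
    refine ⟨?_, fun h => hle ((Submodule.span_singleton_le_iff_mem _ _).2 h)⟩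
    have : v ∈ Submodule.span F {u} := he ▸ Submodule.mem_span_singleton_self v
    obtain ⟨a, rfl⟩ := Submodule.mem_span_singleton.1 this
    rw [QuadraticMap.map_smul, hQu]; simp
  -- double count for R
  have d1 := hlp_dc Q n H (Finset.univ.filter fun v : V => v ≠ 0 ∧ Submodule.span F {v} ∈ R.toFinset)
    (by
      intro v hv
      simp at hv
      exact (hRv v hv.1 hv.2).2) N (m * (q - 1))
    (by
      intro v hv
      simp at hv
      exact hN v (hRv v hv.1 hv.2).1 (hRv v hv.1 hv.2).2)
    (by
      intro g hg hgH
      rw [← hR.2 g hg hgH, Set.ncard_eq_toFinset_card', ← hq, ← hlp_pts]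
      · congr 1
        ext v
        simp [and_assoc]
      · intro P hP
        simp at hP
        exact hR1 P hP.1)
  rw [hlp_pts _ (by intro P hP; simp at hP; exact hR1 P hP), ← Set.ncard_eq_toFinset_card', hq] at d1
  -- double count for all affine points
  have d2 := hlp_dc Q n H (Finset.univ.filter fun v : V => Q v = 0 ∧ v ∉ H)
    (by
      intro v hv
      simp at hv
      exact hv.2) N (q ^ (n - 1) * (q - 1))
    (by
      intro v hv
      simp at hv
      exact hN v hv.1 hv.2)
    (by
      intro g hg hgH
      have h1 : (Finset.univ.filter fun v : V => v ∈ g).card = q ^ n := by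
        rw [← Fintype.card_subtype, ← hq, ← hg.2]
        exact Module.card_eq_pow_finrank (K := F) (V := g)
      have hi : finrank F (g ⊓ H : Submodule F V) = n - 1 := by
        have h1 := Submodule.finrank_sup_add_finrank_inf_eq g H
        have h2 := Submodule.finrank_le (g ⊔ H)
        have h3 : finrank F (g ⊓ H : Submodule F V) < finrank F g := by
          apply Submodule.finrank_lt_finrank_of_lt
          exact lt_of_le_of_ne inf_le_left fun h => hgH (inf_eq_left.1 h)
        have := hg.2
        omega
      have h2 : (Finset.univ.filter fun v : V => v ∈ g ⊓ H).card = q ^ (n - 1) := by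
        rw [← Fintype.card_subtype, ← hq, ← hi]
        exact Module.card_eq_pow_finrank (K := F) (V := (g ⊓ H : Submodule F V))
      have h3 := Finset.card_filter_add_card_filter_not
        (s := Finset.univ.filter fun v : V => v ∈ g) (fun v => v ∈ H)
      rw [h1, Finset.filter_filter, Finset.filter_filter] at h3
      have h4 : (Finset.univ.filter fun v : V => v ∈ g ∧ v ∈ H).card = q ^ (n - 1) := by
        rw [← h2]; simp
      rw [h4] at h3
      have h5 : ((Finset.univ.filter fun v : V => Q v = 0 ∧ v ∉ H).filter fun v => v ∈ g)
          = Finset.univ.filter fun v : V => v ∈ g ∧ v ∉ H := by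
        ext v
        simp only [Finset.mem_filter, Finset.mem_univ, true_and]
        constructor
        · rintro ⟨⟨a, b⟩, c⟩
          exact ⟨c, b⟩
        · rintro ⟨c, b⟩
          exact ⟨⟨hg.1 v c, b⟩, c⟩
      rw [h5]
      have h6 : q ^ n = q ^ (n - 1) * q := by rw [← pow_succ]; congr 1; omega
      rw [Nat.mul_sub, mul_one, ← h6]
      omega)
  have haff := hlp_aff n hn hV Q hQnd hQw H hH hHnd
  rw [Nat.card_eq_fintype_card, Fintype.card_subtype, hq] at haff
  set G := (Finset.univ.filter fun g : Submodule F V => IsGenerator Q n g ∧ ¬ g ≤ H).card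
  set S := (Finset.univ.filter fun v : V => Q v = 0 ∧ v ∉ H).card
  obtain ⟨k, rfl⟩ : ∃ k, n = k + 1 := ⟨n - 1, by omega⟩
  obtain ⟨r, rfl⟩ : ∃ r, q = r + 1 := ⟨q - 1, by omega⟩
  simp only [Nat.add_sub_cancel] at *
  have hr : 0 < r := by omega
  generalize R.ncard = x at *
  have hp : 1 ≤ (r + 1) ^ (k + 1) := Nat.one_le_pow _ _ (by omega)
  obtain ⟨y, hy⟩ : ∃ y, (r + 1) ^ (k + 1) = y + 1 := ⟨(r + 1) ^ (k + 1) - 1, by omega⟩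
  have hS : S = (r + 1) ^ (k + 1) * r * y := by
    have e1 : (r + 1) ^ (2 * (k + 1)) = (y + 1) * (y + 1) := by rw [← hy]; ring
    rw [pow_succ _ (2 * (k + 1)), pow_succ _ (k + 1), e1, hy] at haff
    rw [hy]
    nlinarith
  have hz : 0 < (r + 1) ^ k := by positivity
  rw [hy, Nat.add_sub_cancel]
  -- x * r * N = G * (m * r),  S * N = G * (z * r)
  have h1 : (x * (r + 1) ^ k) * (r * N) = (m * (r + 1) * y * (r + 1) ^ k) * (r * N) := by
    calc (x * (r + 1) ^ k) * (r * N) = (x * r * N) * (r + 1) ^ k := by ring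
      _ = m * (G * ((r + 1) ^ k * r)) := by rw [d1]; ring
      _ = m * (S * N) := by rw [d2]
      _ = _ := by rw [hS]; ring
  exact Nat.eq_of_mul_eq_mul_right hz (Nat.eq_of_mul_eq_mul_right (Nat.mul_pos hr hNpos) h1)
end
end

section
/- Let H' ≤ V be another hyperplane such that the restriction of Q to H' is nondegenerate (so the singular points in H' form a parabolic quadric Q'), and suppose the restriction of Q to H ∩ H' is nondegenerate of Witt index n − 1 (i.e. the section 𝒬 ∩ Q' is an elliptic quadric Q⁻(2n−1,q)). If R is a relative m-ovoid of Q⁻(2n+1,q) with respect to 𝒬, then the number of points of R contained in H' equals m(qⁿ + 1). -/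
noncomputable section

open Module

variable {F V : Type*} [Field F] [AddCommGroup V] [Module F V]

/-- The restriction of `Q` to the subspace `U` has Witt index `k`. -/
def HasWittIndexOn (Q : QuadraticForm F V) (U : Submodule F V) (k : ℕ) : Prop :=
  (∀ W : Submodule F V, W ≤ U → TotallySingular Q W → finrank F W ≤ k) ∧
  ∃ W : Submodule F V, W ≤ U ∧ TotallySingular Q W ∧ finrank F W = k


lemma aux_exists_singular {F V : Type*} [Field F] [AddCommGroup V] [Module F V] [Fintype F]
    (Q : QuadraticForm F V) (X : Submodule F V) (hX : 3 ≤ finrank F X) :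
    ∃ v ∈ X, v ≠ 0 ∧ Q v = 0 := by
  classical
  have : Module.Finite F X := Module.finite_of_finrank_pos (by omega)
  obtain ⟨B, hB⟩ := LinearMap.BilinMap.toQuadraticMap_surjective (R := F) (M := X) (N := F)
    (Q.comp X.subtype)
  let b := Module.finBasis F X
  let f : MvPolynomial (Fin (finrank F X)) F :=
    ∑ i, ∑ j, MvPolynomial.C (B (b i) (b j)) * (MvPolynomial.X i * MvPolynomial.X j)
  have hdeg : f.totalDegree < Fintype.card (Fin (finrank F X)) := by
    rw [Fintype.card_fin]
    refine lt_of_le_of_lt (b := 2) ?_ (by omega)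
    refine MvPolynomial.totalDegree_finsetSum_le fun i _ => ?_
    refine MvPolynomial.totalDegree_finsetSum_le fun j _ => ?_
    refine (MvPolynomial.totalDegree_mul _ _).trans ?_
    rw [MvPolynomial.totalDegree_C, zero_add]
    refine (MvPolynomial.totalDegree_mul _ _).trans ?_
    rw [MvPolynomial.totalDegree_X, MvPolynomial.totalDegree_X]
  have heval : ∀ x, MvPolynomial.eval x f = Q (∑ i, x i • b i : X) := by
    intro x
    have : Q (∑ i, x i • b i : X) = (Q.comp X.subtype) (∑ i, x i • b i : X) := rfl
    rw [this, ← hB]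
    simp only [f, LinearMap.BilinMap.toQuadraticMap_apply, map_sum, LinearMap.sum_apply, map_smul,
      LinearMap.smul_apply, map_mul, MvPolynomial.eval_C, MvPolynomial.eval_X, smul_eq_mul,
      Finset.mul_sum]
    rw [Finset.sum_comm]
    refine Finset.sum_congr rfl fun i _ => Finset.sum_congr rfl fun j _ => ?_
    ring
  obtain ⟨p, hp⟩ := CharP.exists F
  have hpp : p.Prime := CharP.char_is_prime F p
  have hdvd := char_dvd_card_solutions p hdeg
  have h0 : MvPolynomial.eval (0 : Fin (finrank F X) → F) f = 0 := by
    rw [heval]; simp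
  have hpos : 0 < Fintype.card {x // MvPolynomial.eval x f = 0} :=
    Fintype.card_pos_iff.2 ⟨⟨0, h0⟩⟩
  have h1 : 1 < Fintype.card {x // MvPolynomial.eval x f = 0} :=
    lt_of_lt_of_le hpp.one_lt (Nat.le_of_dvd hpos hdvd)
  obtain ⟨⟨x, hx⟩, hne⟩ := Fintype.exists_ne_of_one_lt_card h1 ⟨0, h0⟩
  refine ⟨(∑ i, x i • b i : X), Subtype.coe_prop _, ?_, ?_⟩
  · intro h
    apply hne
    have h' : (∑ i, x i • b i : X) = 0 := Subtype.ext h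
    have := Fintype.linearIndependent_iff.1 b.linearIndependent x h'
    exact Subtype.ext (funext this)
  · rw [← heval]; exact hx

/-- orthogonal complement of the hyperbolic pair -/
def auxY {F V : Type*} [Field F] [AddCommGroup V] [Module F V]
    (Q : QuadraticForm F V) (X : Submodule F V) (v w : V) : Submodule F V :=
  X ⊓ (LinearMap.ker (Q.polarBilin v) ⊓ LinearMap.ker (Q.polarBilin w))

lemma mem_auxY {F V : Type*} [Field F] [AddCommGroup V] [Module F V]
    (Q : QuadraticForm F V) (X : Submodule F V) (v w x : V) :
    x ∈ auxY Q X v w ↔ x ∈ X ∧ QuadraticMap.polar Q v x = 0 ∧ QuadraticMap.polar Q w x = 0 := by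
  simp [auxY]

/-- hyperbolic pair in X -/
structure HypPair {F V : Type*} [Field F] [AddCommGroup V] [Module F V]
    (Q : QuadraticForm F V) (X : Submodule F V) (v w : V) : Prop where
  hv : v ∈ X
  hw : w ∈ X
  qv : Q v = 0
  qw : Q w = 0
  vw : QuadraticMap.polar Q v w = 1

lemma exists_hypPair {F V : Type*} [Field F] [AddCommGroup V] [Module F V]
    (Q : QuadraticForm F V) (X : Submodule F V) (hX : NondegOn Q X) (v : V) (hv : v ∈ X)
    (hv0 : v ≠ 0) (qv : Q v = 0) : ∃ w, HypPair Q X v w := by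
  have : ∃ u ∈ X, QuadraticMap.polar Q v u ≠ 0 := by
    by_contra! h
    exact hv0 (hX v hv qv h)
  obtain ⟨u, hu, hne⟩ := this
  set c := QuadraticMap.polar Q v u with hc
  refine ⟨c⁻¹ • u - (c⁻¹ ^ 2 * Q u) • v, hv,
    X.sub_mem (X.smul_mem _ hu) (X.smul_mem _ hv), qv, ?_, ?_⟩
  · rw [sub_eq_add_neg, ← neg_smul, QuadraticMap.map_add (⇑Q), QuadraticMap.map_smul,
      QuadraticMap.map_smul, qv, QuadraticMap.polar_smul_left, QuadraticMap.polar_smul_right,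
      QuadraticMap.polar_comm, ← hc]
    simp only [smul_eq_mul]
    field_simp
    ring
  · rw [QuadraticMap.polar_sub_right, QuadraticMap.polar_smul_right, QuadraticMap.polar_smul_right,
      QuadraticMap.polar_self, qv, ← hc]
    simp [hne]

section
variable {F V : Type*} [Field F] [AddCommGroup V] [Module F V]
    {Q : QuadraticForm F V} {X : Submodule F V} {v w : V}

lemma HypPair.vv (h : HypPair Q X v w) : QuadraticMap.polar Q v v = 0 := by
  rw [QuadraticMap.polar_self, h.qv, smul_zero]
lemma HypPair.ww (h : HypPair Q X v w) : QuadraticMap.polar Q w w = 0 := by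
  rw [QuadraticMap.polar_self, h.qw, smul_zero]
lemma HypPair.wv (h : HypPair Q X v w) : QuadraticMap.polar Q w v = 1 := by
  rw [QuadraticMap.polar_comm, h.vw]

lemma HypPair.rem (h : HypPair Q X v w) {x : V} (hx : x ∈ X) :
    x - QuadraticMap.polar Q w x • v - QuadraticMap.polar Q v x • w ∈ auxY Q X v w := by
  rw [mem_auxY]
  refine ⟨X.sub_mem (X.sub_mem hx (X.smul_mem _ h.hv)) (X.smul_mem _ h.hw), ?_, ?_⟩ <;>
  simp [-QuadraticMap.polar_self, h.vv, h.ww, h.wv, h.vw]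

/-- decomposition -/
def HypPair.equiv (h : HypPair Q X v w) : (F × F × auxY Q X v w) ≃ₗ[F] X where
  toFun t := ⟨t.1 • v + t.2.1 • w + t.2.2, X.add_mem (X.add_mem (X.smul_mem _ h.hv)
    (X.smul_mem _ h.hw)) ((mem_auxY _ _ _ _ _).1 t.2.2.2).1⟩
  map_add' s t := by
    ext
    simp only [Prod.fst_add, Prod.snd_add, Submodule.coe_add, add_smul]
    abel
  map_smul' c t := by
    ext
    simp [smul_smul]
  invFun x := (QuadraticMap.polar Q w x, QuadraticMap.polar Q v x, ⟨_, h.rem x.2⟩)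
  left_inv t := by
    obtain ⟨a, b, y, hy⟩ := t
    have hy' := (mem_auxY _ _ _ _ _).1 hy
    simp [-QuadraticMap.polar_self, h.vv, h.ww, h.wv, h.vw, hy'.2.1, hy'.2.2]
    abel
  right_inv x := by
    ext
    simp

lemma HypPair.Q_equiv (h : HypPair Q X v w) (t : F × F × auxY Q X v w) :
    Q (h.equiv t) = t.1 * t.2.1 + Q t.2.2 := by
  obtain ⟨a, b, y, hy⟩ := t
  have hy' := (mem_auxY _ _ _ _ _).1 hy
  change Q (a • v + b • w + y) = _
  simp only [QuadraticMap.map_add (⇑Q), QuadraticMap.map_smul, QuadraticMap.polar_add_left,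
    QuadraticMap.polar_smul_left, QuadraticMap.polar_smul_right, h.qv, h.qw, h.vw, hy'.2.1, hy'.2.2]
  simp [mul_comm]

lemma HypPair.finrank_eq [FiniteDimensional F V] (h : HypPair Q X v w) :
    finrank F X = finrank F (auxY Q X v w) + 2 := by
  rw [← h.equiv.finrank_eq, Module.finrank_prod, Module.finrank_prod, Module.finrank_self]
  omega

lemma HypPair.nondeg (h : HypPair Q X v w) (hX : NondegOn Q X) :
    NondegOn Q (auxY Q X v w) := by
  intro y hy qy hyy
  have hy' := (mem_auxY _ _ _ _ _).1 hy
  refine hX y hy'.1 qy fun x hx => ?_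
  have h1 := hyy _ (h.rem hx)
  simpa [QuadraticMap.polar_comm Q y, hy'.2.1, hy'.2.2] using h1

open Classical in
/-- number of singular vectors -/
lemma card_singular [Fintype F] [Finite V] (k : ℕ) : ∀ (X : Submodule F V), NondegOn Q X →
    finrank F X = 2 * k + 1 → Nat.card {x : X // Q x = 0} = Nat.card F ^ (2 * k) := by
  induction k with
  | zero =>
    intro X hX hd
    have : ∀ x : X, Q x = 0 → x = 0 := by
      intro x hx
      ext
      by_contra hne
      have hx0 : x ≠ 0 := fun h => hne (by simp [h])
      refine hne (hX x x.2 hx fun w hw => ?_)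
      obtain ⟨c, hc⟩ := (finrank_eq_one_iff_of_nonzero' x hx0).1 (by simpa using hd) ⟨w, hw⟩
      have : w = c • (x : V) := by
        have := congrArg Subtype.val hc
        simpa using this.symm
      rw [this, QuadraticMap.polar_smul_right, QuadraticMap.polar_self, hx]
      simp
    rw [mul_zero, pow_zero, Nat.card_eq_one_iff_unique]
    refine ⟨⟨fun a b => Subtype.ext ?_⟩, ⟨⟨0, by simp⟩⟩⟩
    rw [this a a.2, this b b.2]
  | succ k ih =>
    intro X hX hd
    obtain ⟨v, hv, hv0, qv⟩ := aux_exists_singular Q X (by omega)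
    obtain ⟨w, h⟩ := exists_hypPair Q X hX v hv hv0 qv
    have hdY : finrank F (auxY Q X v w) = 2 * k + 1 := by
      have := h.finrank_eq
      omega
    have hY := ih _ (h.nondeg hX) hdY
    let Y := auxY Q X v w
    let e1 : {x : X // Q x = 0} ≃ {t : F × F × Y // t.1 * t.2.1 + Q t.2.2 = 0} :=
      (h.equiv.toEquiv.subtypeEquiv fun t => by
        rw [← h.Q_equiv]; rfl).symm
    let e2 : {t : F × F × Y // t.1 * t.2.1 + Q t.2.2 = 0} ≃
        (F × {y : Y // Q y = 0}) ⊕ ({b : F // b ≠ 0} × Y) :=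
      { toFun := fun t => if hb : t.1.2.1 = 0 then
            Sum.inl (t.1.1, ⟨t.1.2.2, by have := t.2; rw [hb] at this; simpa using this⟩)
          else Sum.inr (⟨t.1.2.1, hb⟩, t.1.2.2)
        invFun := Sum.elim (fun s => ⟨(s.1, 0, s.2.1), by simp [s.2.2]⟩)
          (fun s => ⟨(-Q s.2 * (s.1 : F)⁻¹, s.1, s.2), by
            have := s.1.2
            simp [this]⟩)
        left_inv := by
          rintro ⟨⟨a, b, y⟩, ht⟩
          by_cases hb : b = 0
          · subst hb; simp
          · simp only [hb, dite_false, Sum.elim_inr]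
            ext1
            simp only [Prod.mk.injEq, and_true]
            simp only at ht
            field_simp
            linear_combination -ht
        right_inv := by
          rintro (⟨a, y, hy⟩ | ⟨⟨b, hb⟩, y⟩)
          · simp
          · simp [hb] }
    rw [Nat.card_congr (e1.trans e2), Nat.card_sum, Nat.card_prod, Nat.card_prod, hY]
    have hc : Nat.card {b : F // b ≠ 0} = Nat.card F - 1 := by
      rw [Nat.card_eq_fintype_card, Nat.card_eq_fintype_card, Fintype.card_subtype_compl]
      simp
    have hcY : Nat.card Y = Nat.card F ^ (2 * k + 1) := by
      rw [Module.natCard_eq_pow_finrank (K := F), hdY]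
    rw [hc, hcY]
    have : 0 < Nat.card F := Nat.card_pos
    obtain ⟨r, hr⟩ : ∃ r, Nat.card F = r + 1 := ⟨Nat.card F - 1, by omega⟩
    rw [hr, Nat.add_sub_cancel]
    ring
end

section
variable {F V : Type*} [Field F] [AddCommGroup V] [Module F V]
    {Q : QuadraticForm F V} {X : Submodule F V} {v w : V}

/-- generators of dimension k in X -/
def Gens (Q : QuadraticForm F V) (X : Submodule F V) (k : ℕ) : Set (Submodule F V) :=
  {g | g ≤ X ∧ IsGenerator Q k g}

lemma ts_polar {g : Submodule F V} (hg : TotallySingular Q g) {x y : V} (hx : x ∈ g)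
    (hy : y ∈ g) : QuadraticMap.polar Q x y = 0 := by
  rw [QuadraticMap.polar, hg _ (g.add_mem hx hy), hg _ hx, hg _ hy]
  simp

lemma HypPair.v_notMem (h : HypPair Q X v w) : v ∉ auxY Q X v w := by
  intro hv
  have := ((mem_auxY _ _ _ _ _).1 hv).2.2
  rw [h.wv] at this
  exact one_ne_zero this

lemma HypPair.sup_inf (h : HypPair Q X v w) {k : Submodule F V} (hk : k ≤ auxY Q X v w) :
    (k ⊔ F ∙ v) ⊓ auxY Q X v w = k := by
  apply le_antisymm
  · rintro x ⟨hx1, hx2⟩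
    obtain ⟨y, hy, z, hz, rfl⟩ := Submodule.mem_sup.1 hx1
    obtain ⟨c, rfl⟩ := Submodule.mem_span_singleton.1 hz
    have h1 := ((mem_auxY _ _ _ _ _).1 hx2).2.2
    have h2 := ((mem_auxY _ _ _ _ _).1 (hk hy)).2.2
    rw [QuadraticMap.polar_add_right, QuadraticMap.polar_smul_right, h2, h.wv] at h1
    have hc : c = 0 := by simpa using h1
    simpa [hc] using hy
  · exact le_inf le_sup_left hk

lemma HypPair.inf_sup (h : HypPair Q X v w) {g : Submodule F V} (hg : g ≤ X)
    (ts : TotallySingular Q g) (hv : v ∈ g) : (g ⊓ auxY Q X v w) ⊔ F ∙ v = g := by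
  apply le_antisymm
  · refine sup_le inf_le_left ?_
    rwa [Submodule.span_singleton_le_iff_mem]
  · intro x hx
    have h1 := h.rem (hg hx)
    rw [ts_polar ts hv hx, zero_smul, sub_zero] at h1
    refine Submodule.mem_sup.2 ⟨_, ⟨g.sub_mem hx (g.smul_mem _ hv), h1⟩,
      QuadraticMap.polar Q w x • v, Submodule.smul_mem _ _ (Submodule.mem_span_singleton_self v), ?_⟩
    simp

lemma HypPair.finrank_sup [FiniteDimensional F V] (h : HypPair Q X v w) {k : Submodule F V}
    (hk : k ≤ auxY Q X v w) : finrank F (k ⊔ F ∙ v : Submodule F V) = finrank F k + 1 := by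
  have hv0 : v ≠ 0 := fun h0 => h.v_notMem (h0 ▸ Submodule.zero_mem _)
  have h1 := Submodule.finrank_sup_add_finrank_inf_eq k (F ∙ v)
  have h2 : k ⊓ F ∙ v = ⊥ := by
    rw [eq_bot_iff]
    rintro x ⟨hx1, hx2⟩
    obtain ⟨c, rfl⟩ := Submodule.mem_span_singleton.1 hx2
    have h2 := ((mem_auxY _ _ _ _ _).1 (hk hx1)).2.2
    rw [QuadraticMap.polar_smul_right, h.wv] at h2
    have hc : c = 0 := by simpa using h2
    simp [hc]
  rw [h2, finrank_bot, finrank_span_singleton hv0] at h1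
  simpa using h1

lemma HypPair.ts_sup (h : HypPair Q X v w) {k : Submodule F V} (hk : k ≤ auxY Q X v w)
    (ts : TotallySingular Q k) : TotallySingular Q (k ⊔ F ∙ v) := by
  intro x hx
  obtain ⟨y, hy, z, hz, rfl⟩ := Submodule.mem_sup.1 hx
  obtain ⟨c, rfl⟩ := Submodule.mem_span_singleton.1 hz
  have h2 := ((mem_auxY _ _ _ _ _).1 (hk hy)).2.1
  rw [QuadraticMap.map_add (⇑Q), QuadraticMap.map_smul, QuadraticMap.polar_smul_right,
    QuadraticMap.polar_comm, h2, ts y hy, h.qv]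
  simp

/-- generators through v -/
lemma HypPair.card_through [FiniteDimensional F V] (h : HypPair Q X v w) (k : ℕ) :
    {g ∈ Gens Q X (k + 1) | v ∈ g}.ncard = (Gens Q (auxY Q X v w) k).ncard := by
  symm
  refine Set.ncard_congr (fun g _ => g ⊔ F ∙ v) ?_ ?_ ?_
  · rintro g ⟨hg, ts, hd⟩
    refine ⟨⟨sup_le (hg.trans inf_le_left) ?_, h.ts_sup hg ts, ?_⟩, ?_⟩
    · rw [Submodule.span_singleton_le_iff_mem]; exact h.hv
    · rw [h.finrank_sup hg, hd]
    · exact (le_sup_right : F ∙ v ≤ g ⊔ F ∙ v) (Submodule.mem_span_singleton_self v)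
  · rintro a b ⟨ha, -⟩ ⟨hb, -⟩ hab
    rw [← h.sup_inf ha, ← h.sup_inf hb]
    exact congrArg (· ⊓ auxY Q X v w) hab
  · rintro g ⟨⟨hg, ts, hd⟩, hv⟩
    have e := h.inf_sup hg ts hv
    refine ⟨g ⊓ auxY Q X v w, ⟨inf_le_right, fun x hx => ts x hx.1, ?_⟩, e⟩
    have h1 := h.finrank_sup (k := g ⊓ auxY Q X v w) inf_le_right
    rw [e, hd] at h1
    omega

/-- number of generators -/
def numGens (q : ℕ) : ℕ → ℕ
  | 0 => 1
  | k + 1 => (q ^ (k + 1) + 1) * numGens q k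

lemma numGens_pos (q k : ℕ) : 0 < numGens q k := by
  induction k with
  | zero => simp [numGens]
  | succ k ih => simp only [numGens]; positivity

open Classical in
lemma double_count {α β : Type*} [Finite α] [Finite β] (s : Set α) (t : Set β) (r : α → β → Prop)
    (a b : ℕ) (ha : ∀ x ∈ s, {y ∈ t | r x y}.ncard = a) (hb : ∀ y ∈ t, {x ∈ s | r x y}.ncard = b) :
    s.ncard * a = t.ncard * b := by
  have := Fintype.ofFinite α
  have := Fintype.ofFinite β
  have key := Finset.card_nsmul_le_card_nsmul (R := ℕ) (s := s.toFinset) (t := t.toFinset) (m := a) (n := b) r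
  have key2 := Finset.card_nsmul_le_card_nsmul' (R := ℕ) (s := s.toFinset) (t := t.toFinset) (m := a) (n := b) r
  have e1 : ∀ x ∈ s.toFinset, (t.toFinset.bipartiteAbove r x).card = a := by
    intro x hx
    rw [← ha x (by simpa using hx), Set.ncard_eq_toFinset_card']
    congr 1
    ext y
    simp [Finset.bipartiteAbove]
  have e2 : ∀ y ∈ t.toFinset, (s.toFinset.bipartiteBelow r y).card = b := by
    intro y hy
    rw [← hb y (by simpa using hy), Set.ncard_eq_toFinset_card']
    congr 1
    ext x
    simp [Finset.bipartiteBelow]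
  rw [Set.ncard_eq_toFinset_card', Set.ncard_eq_toFinset_card']
  apply le_antisymm
  · simpa using key (fun x hx => by simp [e1 x hx]) (fun x hx => by simp [e2 x hx])
  · simpa using key2 (fun x hx => by simp [e2 x hx]) (fun x hx => by simp [e1 x hx])

lemma card_gens_through [Finite V] (k N : ℕ)
    (ih : ∀ (X : Submodule F V), NondegOn Q X →
      finrank F X = 2 * k + 1 → (Gens Q X k).ncard = N) (X : Submodule F V) (hX : NondegOn Q X)
    (hd : finrank F X = 2 * (k + 1) + 1) (v : V) (hv : v ∈ X) (hv0 : v ≠ 0) (qv : Q v = 0) :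
    {g ∈ Gens Q X (k + 1) | v ∈ g}.ncard = N := by
  obtain ⟨w, h⟩ := exists_hypPair Q X hX v hv hv0 qv
  rw [h.card_through]
  refine ih _ (h.nondeg hX) ?_
  have := h.finrank_eq
  omega

lemma card_gens [Fintype F] [Finite V] (k : ℕ) : ∀ (X : Submodule F V), NondegOn Q X →
    finrank F X = 2 * k + 1 → (Gens Q X k).ncard = numGens (Nat.card F) k := by
  induction k with
  | zero =>
    intro X hX hd
    rw [numGens, Set.ncard_eq_one]
    refine ⟨⊥, ?_⟩
    ext g
    simp only [Gens, IsGenerator, Set.mem_ofPred_eq, Set.mem_singleton_iff, Submodule.finrank_eq_zero]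
    constructor
    · rintro ⟨-, -, h⟩; exact h
    · rintro rfl
      refine ⟨bot_le, ?_, rfl⟩
      intro x hx
      rw [(Submodule.mem_bot F).1 hx, QuadraticMap.map_zero]
  | succ k ih =>
    intro X hX hd
    have hcard : ∀ s : Set V, (0 : V) ∈ s → {x ∈ s | x ≠ 0}.ncard = s.ncard - 1 := by
      intro s hs
      rw [← Set.ncard_sdiff_singleton_of_mem hs]
      rfl
    have hS : {x | x ∈ X ∧ Q x = 0}.ncard = Nat.card F ^ (2 * (k + 1)) := by
      rw [← card_singular (k + 1) X hX hd, ← Nat.card_coe_set_eq]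
      exact Nat.card_congr (Equiv.subtypeSubtypeEquivSubtypeInter (· ∈ X) (fun x => Q x = 0)).symm
    have dc := double_count {x ∈ {x | x ∈ X ∧ Q x = 0} | x ≠ 0} (Gens Q X (k + 1))
      (fun x g => x ∈ g) (numGens (Nat.card F) k) (Nat.card F ^ (k + 1) - 1)
      (fun x hx => card_gens_through k _ ih X hX hd x hx.1.1 hx.2 hx.1.2)
      (by
        rintro g ⟨hg, ts, hgd⟩
        have : {x | x ∈ {x | x ∈ {x | x ∈ X ∧ Q x = 0} ∧ x ≠ 0} ∧ x ∈ g}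
            = {x ∈ (g : Set V) | x ≠ 0} := by
          ext x
          constructor
          · rintro ⟨⟨-, h0⟩, h⟩; exact ⟨h, h0⟩
          · rintro ⟨h, h0⟩; exact ⟨⟨⟨hg h, ts x h⟩, h0⟩, h⟩
        rw [this, hcard _ g.zero_mem, ← hgd, ← Module.natCard_eq_pow_finrank (K := F)]
        rfl)
    rw [hcard {x | x ∈ X ∧ Q x = 0} ⟨X.zero_mem, QuadraticMap.map_zero Q⟩, hS] at dc
    have h1 : 1 < Nat.card F ^ (k + 1) := by
      refine Nat.one_lt_pow (by omega) ?_
      exact Finite.one_lt_card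
    obtain ⟨r, hr⟩ : ∃ r, Nat.card F ^ (k + 1) = r + 2 := ⟨Nat.card F ^ (k + 1) - 2, by omega⟩
    have h2 : Nat.card F ^ (2 * (k + 1)) - 1 = (r + 1) * (r + 3) := by
      rw [mul_comm, pow_mul, hr]
      have : (r + 2) ^ 2 = (r + 1) * (r + 3) + 1 := by ring
      omega
    rw [h2, hr] at dc
    rw [numGens, hr]
    have h3 : r + 2 - 1 = r + 1 := rfl
    rw [h3] at dc
    refine Nat.eq_of_mul_eq_mul_right (Nat.succ_pos r) ?_
    rw [← dc, Nat.succ_eq_add_one]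
    ring
end

/-- If the parabolic section `Q' = Q ∩ H'` meets `𝒬` in an elliptic quadric
`Q⁻(2n−1,q)`, then a relative `m`-ovoid has exactly `m(qⁿ + 1)` points in `H'`. -/
theorem statement_2
    (q n : ℕ) [Fintype F] (hq : Fintype.card F = q) (hn : 2 ≤ n)
    (hV : finrank F V = 2 * n + 2)
    (Q : QuadraticForm F V) (hQnd : Nondeg Q) (hQw : HasWittIndex Q n)
    (H : Submodule F V) (hH : finrank F H = 2 * n + 1) (hHnd : NondegOn Q H)
    (H' : Submodule F V) (hH'dim : finrank F H' = 2 * n + 1) (hH'nd : NondegOn Q H')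
    (hsecnd : NondegOn Q (H ⊓ H')) (hsecw : HasWittIndexOn Q (H ⊓ H') (n - 1))
    (m : ℕ) (R : Set (Submodule F V)) (hR : IsRelativeMOvoid Q n H m R) :
    {P ∈ R | P ≤ H'}.ncard = m * (q ^ n + 1) := by
  subst hq
  have : Module.Finite F V := Module.finite_of_finrank_pos (by omega)
  have : Finite V := Module.finite_of_finite F
  have : Finite (Submodule F V) := Finite.of_injective _ (SetLike.coe_injective (A := Submodule F V))
  obtain ⟨k, rfl⟩ : ∃ k, n = k + 1 := ⟨n - 1, by omega⟩
  have dc := double_count {P ∈ R | P ≤ H'} (Gens Q H' (k + 1)) (fun P g => P ≤ g)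
    (numGens (Nat.card F) k) m
    (by
      rintro P ⟨hP, hPH⟩
      obtain ⟨⟨v, hv0, qv, rfl⟩, -⟩ := hR.1 P hP
      simp only [Submodule.span_singleton_le_iff_mem] at hPH ⊢
      exact card_gens_through k _ (card_gens k) H' hH'nd hH'dim v hPH hv0 qv)
    (by
      rintro g ⟨hg, hgen⟩
      rw [← hR.2 g hgen]
      · congr 1
        ext P
        constructor
        · rintro ⟨⟨h1, -⟩, h2⟩; exact ⟨h1, h2⟩
        · rintro ⟨h1, h2⟩; exact ⟨⟨h1, h2.trans hg⟩, h2⟩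
      · intro hgH
        have := hsecw.1 g (le_inf hgH hg) hgen.1
        rw [hgen.2] at this
        omega)
  rw [card_gens (k + 1) H' hH'nd hH'dim, numGens] at dc
  refine Nat.eq_of_mul_eq_mul_right (numGens_pos (Nat.card F) k) ?_
  rw [dc, Nat.card_eq_fintype_card]
  ring
end
end

section
/- Let H' ≤ V be another hyperplane such that the restriction of Q to H' is nondegenerate (so the singular points in H' form a parabolic quadric Q'), and suppose the restriction of Q to H ∩ H' is degenerate, i.e. there exists a nonzero v ∈ H ∩ H' with Q(v) = 0 and B(v,w) = 0 for all w ∈ H ∩ H' (so the section 𝒬 ∩ Q' is a cone). If R is a relative m-ovoid of Q⁻(2n+1,q) with respect to 𝒬, then the number of points of R contained in H' equals m·qⁿ. -/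
noncomputable section

open Module

variable {F V : Type*} [Field F] [AddCommGroup V] [Module F V]

/-- The restriction of `Q` to the subspace `U` is degenerate. -/
def DegenOn (Q : QuadraticForm F V) (U : Submodule F V) : Prop :=
  ∃ v ∈ U, v ≠ 0 ∧ Q v = 0 ∧ ∀ w ∈ U, QuadraticMap.polar (⇑Q) v w = 0

theorem aux_isotropic [Fintype F] (Q : QuadraticForm F V) (C : Submodule F V)
    (hC : 3 ≤ finrank F C) : ∃ x ∈ C, x ≠ 0 ∧ Q x = 0 := by
  classical
  obtain ⟨b, hb⟩ := exists_linearIndependent_of_le_finrank hC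
  have hb' : LinearIndependent F (fun i => (b i : V)) := hb.map' C.subtype (by simp)
  set a := fun i => (b i : V) with ha
  let f : MvPolynomial (Fin 3) F :=
    ∑ ij : Fin 3 × Fin 3, MvPolynomial.C
      (if ij.1 = ij.2 then Q (a ij.1) else if ij.1 < ij.2 then QuadraticMap.polar Q (a ij.1) (a ij.2) else 0)
      * (MvPolynomial.X ij.1 * MvPolynomial.X ij.2)
  have hf : ∀ x : Fin 3 → F, MvPolynomial.eval x f = Q (∑ i, x i • a i) := by
    intro x
    simp only [f, map_sum, map_mul, MvPolynomial.eval_C, MvPolynomial.eval_X, Fintype.sum_prod_type,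
      Fin.sum_univ_three]
    have h1 : ∀ u w : V, Q (u + w) = Q u + Q w + QuadraticMap.polar Q u w := by
      intro u w; simp [QuadraticMap.polar]
    simp only [h1, QuadraticMap.map_smul, QuadraticMap.polar_add_left, QuadraticMap.polar_smul_left,
      QuadraticMap.polar_smul_right, smul_eq_mul]
    simp
    ring
  have hdeg : f.totalDegree < Fintype.card (Fin 3) := by
    have : f.totalDegree ≤ 2 := by
      refine MvPolynomial.totalDegree_finsetSum_le (fun ij _ => ?_)
      refine (MvPolynomial.totalDegree_mul _ _).trans ?_
      have := MvPolynomial.totalDegree_mul (MvPolynomial.X ij.1 : MvPolynomial (Fin 3) F) (MvPolynomial.X ij.2)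
      simp only [MvPolynomial.totalDegree_C, MvPolynomial.totalDegree_X] at *
      omega
    simp; omega
  obtain ⟨p, hp⟩ := CharP.exists F
  have hpp : p.Prime := CharP.char_is_prime F p
  have hdvd := char_dvd_card_solutions p hdeg
  by_contra hcon
  push Not at hcon
  have hone : Fintype.card { x : Fin 3 → F // MvPolynomial.eval x f = 0 } = 1 := by
    rw [Fintype.card_eq_one_iff]
    refine ⟨⟨0, by rw [hf]; simp⟩, ?_⟩
    rintro ⟨x, hx⟩
    rw [hf] at hx
    apply Subtype.ext
    by_contra hx0
    apply hcon (∑ i, x i • a i) (Submodule.sum_mem _ (fun i _ => C.smul_mem _ (b i).2)) _ hx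
    intro h0
    exact hx0 (funext (Fintype.linearIndependent_iff.1 hb' x h0))
  rw [hone] at hdvd
  exact hpp.one_lt.ne' (Nat.dvd_one.1 hdvd)

theorem aux_ker [Module.Finite F V] {N : Type*} [AddCommGroup N] [Module F N] [Module.Finite F N]
    (W : Submodule F V) (f : V →ₗ[F] N) :
    finrank F W ≤ finrank F (W ⊓ LinearMap.ker f : Submodule F V) + finrank F N := by
  have h1 := LinearMap.finrank_range_add_finrank_ker f
  have h2 := Submodule.finrank_sup_add_finrank_inf_eq W (LinearMap.ker f)
  have h3 := Submodule.finrank_le (W ⊔ LinearMap.ker f)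
  have h4 := Submodule.finrank_le (LinearMap.range f)
  omega

theorem aux_add (Q : QuadraticForm F V) (u w : V) :
    Q (u + w) = Q u + Q w + Q.polarBilin u w := by
  simp [QuadraticMap.polar]

theorem aux_polar_ts (Q : QuadraticForm F V) {M : Submodule F V} (hM : TotallySingular Q M)
    {u w : V} (hu : u ∈ M) (hw : w ∈ M) : Q.polarBilin u w = 0 := by
  have := aux_add Q u w
  rw [hM _ hu, hM _ hw, hM _ (M.add_mem hu hw)] at this
  simpa using this.symm

theorem aux_comm (Q : QuadraticForm F V) (u w : V) : Q.polarBilin u w = Q.polarBilin w u := by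
  simp [QuadraticMap.polar_comm]

theorem aux_span_ts (Q : QuadraticForm F V) {M : Submodule F V} (hM : TotallySingular Q M)
    {x : V} (hx : Q x = 0) (hp : ∀ w ∈ M, Q.polarBilin x w = 0) :
    TotallySingular Q (Submodule.span F {x} ⊔ M) := by
  intro y hy
  obtain ⟨a, ha, d, hd, rfl⟩ := Submodule.mem_sup.1 hy
  obtain ⟨c, rfl⟩ := Submodule.mem_span_singleton.1 ha
  rw [aux_add, QuadraticMap.map_smul, hx, hM d hd, map_smul, LinearMap.smul_apply, hp d hd]
  simp

theorem aux_finrank_span [Module.Finite F V] {M : Submodule F V} {x : V} (hx : x ∉ M) :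
    finrank F (Submodule.span F {x} ⊔ M : Submodule F V) = finrank F M + 1 := by
  have hx0 : x ≠ 0 := fun h => hx (h ▸ M.zero_mem)
  have h2 := Submodule.finrank_sup_add_finrank_inf_eq (Submodule.span F {x}) M
  have h3 : Submodule.span F {x} ⊓ M = ⊥ := by
    rw [Submodule.eq_bot_iff]
    rintro y ⟨hy1, hy2⟩
    obtain ⟨c, rfl⟩ := Submodule.mem_span_singleton.1 hy1
    by_contra hc
    have hc' : c ≠ 0 := fun h => hc (by simp [h])
    exact hx ((Submodule.smul_mem_iff M hc').1 hy2)
  rw [h3, finrank_bot, finrank_span_singleton hx0] at h2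
  omega

theorem aux_gen [Fintype F] [Module.Finite F V] (n : ℕ) (hV : finrank F V = 2 * n + 2)
    (Q : QuadraticForm F V) (H' : Submodule F V) (hH'dim : finrank F H' = 2 * n + 1)
    (v : V) (hv : v ∈ H') (hv0 : v ≠ 0) (hQv : Q v = 0) (k : ℕ) (hk : 1 ≤ k) :
    k ≤ n → ∃ M : Submodule F V, M ≤ H' ∧ TotallySingular Q M ∧ v ∈ M ∧ finrank F M = k := by
  induction k, hk using Nat.le_induction with
  | base =>
    intro _
    refine ⟨Submodule.span F {v}, by simpa using hv, ?_, Submodule.mem_span_singleton_self v,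
      finrank_span_singleton hv0⟩
    intro y hy
    obtain ⟨c, rfl⟩ := Submodule.mem_span_singleton.1 hy
    simp [QuadraticMap.map_smul, hQv]
  | succ k hk ih =>
    intro hkn
    obtain ⟨M, hMH, hMT, hvM, hMk⟩ := ih (by omega)
    let f : V →ₗ[F] (M →ₗ[F] F) := (LinearMap.lcomp F F M.subtype).comp Q.polarBilin
    have h1 := aux_ker H' f
    have h2 : finrank F (M →ₗ[F] F) = k := by
      rw [← hMk]; exact Subspace.dual_finrank_eq
    obtain ⟨C, hC⟩ := Submodule.exists_isCompl M
    have h3 := Submodule.finrank_add_eq_of_isCompl hC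
    have h4 := Submodule.finrank_sup_add_finrank_inf_eq (H' ⊓ LinearMap.ker f) C
    have h5 := Submodule.finrank_le (H' ⊓ LinearMap.ker f ⊔ C)
    obtain ⟨x, hxC, hx0, hQx⟩ := aux_isotropic Q (H' ⊓ LinearMap.ker f ⊓ C) (by omega)
    obtain ⟨⟨hxH, hxf⟩, hxC⟩ := hxC
    have hxM : x ∉ M := fun h => hx0 (by
      have := Submodule.disjoint_def.1 hC.disjoint x h hxC
      exact this)
    refine ⟨Submodule.span F {x} ⊔ M, sup_le (by simpa using hxH) hMH,
      aux_span_ts Q hMT hQx ?_, Submodule.mem_sup_right hvM, ?_⟩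
    · intro w hw
      have := LinearMap.congr_fun (LinearMap.mem_ker.1 hxf) ⟨w, hw⟩
      simpa [f] using this
    · rw [aux_finrank_span hxM, hMk]

/-- If the parabolic section `Q' = Q ∩ H'` meets `𝒬` in a cone, then a relative
`m`-ovoid has exactly `m·qⁿ` points in `H'`. -/
theorem statement_4
    (q n : ℕ) [Fintype F] (hq : Fintype.card F = q) (hn : 2 ≤ n)
    (hV : finrank F V = 2 * n + 2)
    (Q : QuadraticForm F V) (hQnd : Nondeg Q) (hQw : HasWittIndex Q n)
    (H : Submodule F V) (hH : finrank F H = 2 * n + 1) (hHnd : NondegOn Q H)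
    (H' : Submodule F V) (hH'dim : finrank F H' = 2 * n + 1) (hH'nd : NondegOn Q H')
    (hsec : DegenOn Q (H ⊓ H'))
    (m : ℕ) (R : Set (Submodule F V)) (hR : IsRelativeMOvoid Q n H m R) :
    {P ∈ R | P ≤ H'}.ncard = m * q ^ n := by
  classical
  have : Module.Finite F V := Module.finite_of_finrank_pos (by omega)
  have : Finite V := Module.finite_of_finite F
  have : Fintype V := Fintype.ofFinite V
  obtain ⟨v, ⟨hvH, hvH'⟩, hv0, hQv, hvp⟩ := hsec
  set B := Q.polarBilin with hB
  have hBv : ∀ w ∈ H ⊓ H', B v w = 0 := fun w hw => hvp w hw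
  set K : Submodule F V := H' ⊓ LinearMap.ker (B v) with hK
  have hUK : H ⊓ H' ≤ K := fun w hw => ⟨hw.2, LinearMap.mem_ker.2 (hBv w hw)⟩
  have hKlt : K < H' := by
    refine lt_of_le_of_ne inf_le_left (fun h => hv0 (hH'nd v hvH' hQv fun w hw => ?_))
    rw [← h] at hw
    exact hw.2
  have hKdim1 : finrank F K < finrank F H' := Submodule.finrank_lt_finrank_of_lt hKlt
  have hUdim : 2 * n ≤ finrank F (H ⊓ H' : Submodule F V) := by
    have h2 := Submodule.finrank_sup_add_finrank_inf_eq H H'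
    have h3 := Submodule.finrank_le (H ⊔ H')
    omega
  have hKU : H ⊓ H' = K := Submodule.eq_of_le_of_finrank_le hUK (by omega)
  have hKdim : finrank F K = 2 * n := by rw [hKU] at hUdim; omega
  have hcard : ∀ W : Submodule F V, (Finset.univ.filter (fun x : V => x ∈ W)).card
      = q ^ finrank F W := by
    intro W
    rw [← hq, ← Module.card_eq_pow_finrank (K := F) (V := W), Fintype.card_subtype]
  obtain ⟨g0, hg0H, hg0T, hvg0, hg0n⟩ :=
    aux_gen n hV Q H' hH'dim v hvH' hv0 hQv n (by omega) le_rfl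
  have hBg0 : ∀ d ∈ g0, B v d = 0 := fun d hd => aux_polar_ts Q hg0T hvg0 hd
  -- points versus normalized vectors
  have hspan : ∀ y : V, Submodule.span F {y} ∈ R → Q y = 0 := by
    intro y hy
    obtain ⟨w, _, hw, he⟩ := (hR.1 _ hy).1
    have : y ∈ Submodule.span F {w} := he ▸ Submodule.mem_span_singleton_self y
    obtain ⟨c, rfl⟩ := Submodule.mem_span_singleton.1 this
    simp [QuadraticMap.map_smul, hw]
  let T : Finset V := Finset.univ.filter
    (fun y => y ∈ H' ∧ B v y = 1 ∧ Submodule.span F {y} ∈ R)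
  have hpts : ∀ g : Submodule F V, g ≤ H' →
      {P ∈ R | P ≤ g}.ncard = (T.filter (fun y => y ∈ g)).card := by
    intro g hg
    have himg : {P ∈ R | P ≤ g} =
        (fun y : V => Submodule.span F {y}) '' (↑(T.filter (fun y => y ∈ g)) : Set V) := by
      ext P
      simp only [Set.mem_ofPred_eq, Set.mem_image, Finset.coe_filter, T, Finset.mem_filter,
        Finset.mem_univ, true_and]
      constructor
      · rintro ⟨hPR, hPg⟩
        obtain ⟨⟨w, hw0, hQw', rfl⟩, hPH⟩ := hR.1 P hPR
        have hwg : w ∈ g := hPg (Submodule.mem_span_singleton_self w)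
        have hwH : w ∉ H := fun h => hPH (by simpa using h)
        have hBw : B v w ≠ 0 := by
          intro h
          have : w ∈ K := ⟨hg hwg, LinearMap.mem_ker.2 h⟩
          rw [← hKU] at this
          exact hwH this.1
        have hs : Submodule.span F {(B v w)⁻¹ • w} = Submodule.span F {w} :=
          Submodule.span_singleton_smul_eq (IsUnit.mk0 _ (inv_ne_zero hBw)) w
        refine ⟨(B v w)⁻¹ • w, ⟨⟨H'.smul_mem _ (hg hwg), ?_, by rw [hs]; exact hPR⟩,
          g.smul_mem _ hwg⟩, hs⟩
        rw [map_smul, smul_eq_mul, inv_mul_cancel₀ hBw]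
      · rintro ⟨y, ⟨⟨_, _, hyR⟩, hyg⟩, rfl⟩
        exact ⟨hyR, by simpa using hyg⟩
    rw [himg, Set.InjOn.ncard_image, Set.ncard_coe_finset]
    intro y hy z hz hyz
    simp only [Finset.coe_filter, T, Finset.mem_filter, Finset.mem_univ, true_and,
      Set.mem_ofPred_eq] at hy hz
    have : y ∈ Submodule.span F {z} := by
      rw [← show Submodule.span F {y} = Submodule.span F {z} from hyz]
      exact Submodule.mem_span_singleton_self y
    obtain ⟨c, rfl⟩ := Submodule.mem_span_singleton.1 this
    have h1 := hy.1.2.1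
    rw [map_smul, hz.1.2.1, smul_eq_mul, mul_one] at h1
    rw [h1, one_smul]
  -- each singular normalized vector
  have hm : ∀ x ∈ H', B v x = 1 → Q x = 0 →
      (T.filter (fun y => y - x ∈ g0)).card = m := by
    intro x hxH hvx hQx
    set D : Submodule F V := g0 ⊓ LinearMap.ker (B x) with hD
    have hDdim := aux_ker g0 (B x)
    rw [finrank_self, hg0n, ← hD] at hDdim
    have hxD : x ∉ D := by
      intro h
      have := hBg0 x h.1
      rw [hvx] at this
      exact one_ne_zero this
    have hts : TotallySingular Q (Submodule.span F {x} ⊔ D) :=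
      aux_span_ts Q (M := D) (fun d hd => hg0T d (Submodule.mem_inf.1 hd).1) hQx
        (fun d hd => LinearMap.mem_ker.1 (Submodule.mem_inf.1 hd).2)
    have hdim := aux_finrank_span hxD
    have hle := hQw.1 _ hts
    have hgH' : Submodule.span F {x} ⊔ D ≤ H' :=
      sup_le (by simpa using hxH) (inf_le_left.trans hg0H)
    have hxg : x ∈ Submodule.span F {x} ⊔ D :=
      Submodule.mem_sup_left (Submodule.mem_span_singleton_self x)
    have hgH : ¬ (Submodule.span F {x} ⊔ D ≤ H) := by
      intro h
      have := hBv x ⟨h hxg, hxH⟩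
      rw [hvx] at this
      exact one_ne_zero this
    have hcount := hR.2 _ ⟨hts, by omega⟩ hgH
    rw [hpts _ hgH'] at hcount
    rw [← hcount]
    congr 1
    apply Finset.filter_congr
    intro y hy
    simp only [T, Finset.mem_filter, Finset.mem_univ, true_and] at hy
    obtain ⟨hyH, hvy, hyR⟩ := hy
    constructor
    · intro hd
      have hBd : B x (y - x) = 0 := by
        have h := aux_add Q x (y - x)
        rw [add_sub_cancel, hspan y hyR, hQx, hg0T _ hd, add_zero, zero_add] at h
        exact h.symm
      exact Submodule.mem_sup.2 ⟨x, Submodule.mem_span_singleton_self x, y - x,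
        ⟨hd, LinearMap.mem_ker.2 hBd⟩, by abel⟩
    · intro hy
      obtain ⟨a, ha, d, hd, rfl⟩ := Submodule.mem_sup.1 hy
      obtain ⟨c, rfl⟩ := Submodule.mem_span_singleton.1 ha
      rw [map_add, map_smul, hvx, hBg0 d hd.1, smul_eq_mul, mul_one, add_zero] at hvy
      rw [hvy, one_smul, add_sub_cancel_left]
      exact hd.1
  let A : Finset V := Finset.univ.filter (fun x => x ∈ H' ∧ B v x = 1)
  have hAcard : A.card = q ^ (2 * n) := by
    obtain ⟨w, hw, hwK⟩ := SetLike.exists_of_lt hKlt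
    have hBw : B v w ≠ 0 := fun h => hwK ⟨hw, LinearMap.mem_ker.2 h⟩
    rw [← hKdim, ← hcard K]
    set x0 := (B v w)⁻¹ • w with hx0
    have hx0H : x0 ∈ H' := H'.smul_mem _ hw
    have hx0B : B v x0 = 1 := by rw [hx0, map_smul, smul_eq_mul, inv_mul_cancel₀ hBw]
    refine Finset.card_bij' (fun x _ => x - x0) (fun x _ => x + x0) ?_ ?_ ?_ ?_
    · intro x hx
      simp only [A, Finset.mem_filter, Finset.mem_univ, true_and] at hx ⊢
      refine ⟨H'.sub_mem hx.1 hx0H, LinearMap.mem_ker.2 ?_⟩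
      rw [map_sub, hx.2, hx0B, sub_self]
    · intro x hx
      simp only [A, Finset.mem_filter, Finset.mem_univ, true_and] at hx ⊢
      refine ⟨H'.add_mem hx.1 hx0H, ?_⟩
      rw [map_add, LinearMap.mem_ker.1 hx.2, hx0B, zero_add]
    · intro x _; simp
    · intro x _; simp
  have hdc : A.card * m = T.card * q ^ n := by
    refine Finset.card_mul_eq_card_mul (fun x y : V => y - x ∈ g0) ?_ ?_
    · intro x hx
      simp only [A, Finset.mem_filter, Finset.mem_univ, true_and] at hx
      have hBvv : B v v = 0 := hBg0 v hvg0
      have hx' := hm (x - Q x • v) (H'.sub_mem hx.1 (H'.smul_mem _ hvH')) (by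
          rw [map_sub, map_smul, hx.2, hBvv, smul_zero, sub_zero]) (by
          rw [sub_eq_add_neg, ← neg_smul, aux_add, QuadraticMap.map_smul, hQv, map_smul,
            aux_comm]
          change _ + _ + _ • B v x = 0
          rw [hx.2]; simp)
      rw [← hx']
      unfold Finset.bipartiteAbove
      congr 1
      apply Finset.filter_congr
      intro y _
      rw [show y - (x - Q x • v) = (y - x) + Q x • v by abel]
      exact (Submodule.add_mem_iff_left g0 (g0.smul_mem _ hvg0)).symm
    · intro y hy
      simp only [T, Finset.mem_filter, Finset.mem_univ, true_and] at hy
      rw [← hg0n, ← hcard g0]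
      unfold Finset.bipartiteBelow
      refine Finset.card_bij' (fun x _ => y - x) (fun d _ => y - d) ?_ ?_ ?_ ?_
      · intro x hx
        simp only [A, Finset.mem_filter, Finset.mem_univ, true_and] at hx ⊢
        exact hx.2
      · intro d hd
        simp only [A, Finset.mem_filter, Finset.mem_univ, true_and] at hd ⊢
        refine ⟨⟨H'.sub_mem hy.1 (hg0H hd), ?_⟩, by simpa using hd⟩
        rw [map_sub, hy.2.1, hBg0 d hd, sub_zero]
      · intro x _; simp
      · intro x _; simp
  have hT : {P ∈ R | P ≤ H'}.ncard = T.card := by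
    rw [hpts H' le_rfl]
    congr 1
    apply Finset.filter_true_of_mem
    intro y hy
    simp only [T, Finset.mem_filter, Finset.mem_univ, true_and] at hy
    exact hy.1
  rw [hT]
  have hqpos : 0 < q ^ n := by
    rw [← hq]; exact pow_pos Fintype.card_pos n
  apply Nat.eq_of_mul_eq_mul_right hqpos
  rw [← hdc, hAcard]
  ring
end
end

section
/- If R is a relative m-ovoid of Q⁻(2n+1,q) with respect to 𝒬 and P = ⟨v⟩ is a point of R, then the number of points of R contained in the hyperplane v^⊥ = {w ∈ V : B(v,w) = 0} equals m(qⁿ + 1) − qⁿ. -/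
noncomputable section

open Module

variable {F V : Type*} [Field F] [AddCommGroup V] [Module F V]

/-- The hyperplane `v^⊥ = {w : B(v,w) = 0}`, where `B` is the polar form of `Q`. -/
def vperp (Q : QuadraticForm F V) (v : V) : Submodule F V where
  carrier := {w | QuadraticMap.polar (⇑Q) v w = 0}
  zero_mem' := QuadraticMap.polar_zero_right Q v
  add_mem' := fun ha hb => by
    simp only [Set.mem_setOf_eq] at *
    rw [QuadraticMap.polar_add_right, ha, hb, add_zero]
  smul_mem' := fun c w hw => by
    simp only [Set.mem_setOf_eq] at *
    rw [QuadraticMap.polar_smul_right, hw, smul_zero]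

lemma aux_polar_ts_s5 (Q : QuadraticForm F V) {W : Submodule F V} (hW : TotallySingular Q W)
    {x y : V} (hx : x ∈ W) (hy : y ∈ W) : QuadraticMap.polar (⇑Q) x y = 0 := by
  simp [QuadraticMap.polar, hW _ (W.add_mem hx hy), hW _ hx, hW _ hy]

/-- perp -/
def pperp (Q : QuadraticForm F V) (W : Submodule F V) : Submodule F V :=
  LinearMap.BilinForm.orthogonal (QuadraticMap.polarBilin Q) W

lemma mem_pperp (Q : QuadraticForm F V) {W : Submodule F V} {x : V} :
    x ∈ pperp Q W ↔ ∀ w ∈ W, QuadraticMap.polar (⇑Q) w x = 0 := Iff.rfl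

lemma aux_finrank_pperp [FiniteDimensional F V] (Q : QuadraticForm F V) (hQ : Nondeg Q)
    {W : Submodule F V} (hW : TotallySingular Q W) :
    finrank F W + finrank F (pperp Q W) = finrank F V := by
  have h := LinearMap.BilinForm.finrank_add_finrank_orthogonal'
    (B := QuadraticMap.polarBilin Q) W
  have h2 : W ⊓ LinearMap.ker (QuadraticMap.polarBilin Q) = ⊥ := by
    rw [Submodule.eq_bot_iff]
    rintro x ⟨hx, hk⟩
    refine hQ x (hW x hx) fun w => ?_
    have := LinearMap.congr_fun (LinearMap.mem_ker.1 hk) w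
    simpa using this
  rw [h2, finrank_bot, add_zero] at h
  exact h

lemma aux_ts_sup (Q : QuadraticForm F V) {W : Submodule F V} (hW : TotallySingular Q W)
    {x : V} (hx : x ∈ pperp Q W) (hQx : Q x = 0) :
    TotallySingular Q (W ⊔ Submodule.span F {x}) := by
  intro y hy
  obtain ⟨w, hw, z, hz, rfl⟩ := Submodule.mem_sup.1 hy
  obtain ⟨t, rfl⟩ := Submodule.mem_span_singleton.1 hz
  have h1 := (mem_pperp Q).1 hx w hw
  have h2 : QuadraticMap.polar (⇑Q) w (t • x) = 0 := by
    rw [QuadraticMap.polar_smul_right, h1, smul_zero]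
  rw [QuadraticMap.map_add Q, h2, hW w hw, QuadraticMap.map_smul, hQx]
  simp

lemma aux_finrank_sup [FiniteDimensional F V] {W : Submodule F V} {x : V} (hx : x ∉ W) :
    finrank F (W ⊔ Submodule.span F {x} : Submodule F V) = finrank F W + 1 := by
  have hx0 : x ≠ 0 := fun h => hx (h ▸ W.zero_mem)
  have h := Submodule.finrank_sup_add_finrank_inf_eq W (Submodule.span F {x})
  have h2 : W ⊓ Submodule.span F {x} = ⊥ := by
    rw [Submodule.eq_bot_iff]
    rintro y ⟨hy, hk⟩
    obtain ⟨t, rfl⟩ := Submodule.mem_span_singleton.1 hk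
    by_contra hne
    have ht : t ≠ 0 := by rintro rfl; simp at hne
    exact hx ((Submodule.smul_mem_iff W ht).1 hy)
  rw [h2, finrank_bot, finrank_span_singleton hx0] at h
  omega

lemma aux_extend [FiniteDimensional F V] (Q : QuadraticForm F V) (hQ : Nondeg Q) {n : ℕ}
    (hw : HasWittIndex Q n) {W : Submodule F V} (hW : TotallySingular Q W)
    (hk : finrank F W < n) : ∃ x, x ∈ pperp Q W ∧ Q x = 0 ∧ x ∉ W := by
  obtain ⟨g, hg, hgn⟩ := hw.2
  have hD : TotallySingular Q (W ⊓ g) := fun x hx => hW x hx.1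
  have hle : pperp Q W ⊔ g ≤ pperp Q (W ⊓ g) := by
    refine sup_le ?_ ?_
    · intro x hx w hw
      exact hx w hw.1
    · intro x hx w hw
      exact aux_polar_ts_s5 Q hg hw.2 hx
  have h1 := aux_finrank_pperp Q hQ hW
  have h2 := aux_finrank_pperp Q hQ hD
  have h3 := Submodule.finrank_sup_add_finrank_inf_eq (pperp Q W) g
  have h4 := Submodule.finrank_mono hle
  have h5 : ¬ (pperp Q W ⊓ g ≤ W ⊓ g) := fun h => by
    have := Submodule.finrank_mono h
    omega
  obtain ⟨x, hx, hxn⟩ := SetLike.not_le_iff_exists.1 h5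
  exact ⟨x, hx.1, hg x hx.2, fun h => hxn ⟨h, hx.2⟩⟩

open Classical in
lemma aux_card_sub [Fintype F] [Fintype V] (W : Submodule F V) :
    (Finset.univ.filter (fun x : V => x ∈ W)).card = Fintype.card F ^ finrank F W := by
  have h := Module.card_eq_pow_finrank (K := F) (V := W)
  rw [← h]
  exact (Fintype.card_subtype (fun x : V => x ∈ W)).symm

open Classical in
/-- number of singular vectors in the perp -/
def scount [Fintype V] (Q : QuadraticForm F V) (W : Submodule F V) : ℕ :=
  (Finset.univ.filter (fun x : V => x ∈ pperp Q W ∧ Q x = 0)).card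

lemma mem_pperp_sup (Q : QuadraticForm F V) {W : Submodule F V} {x y : V} :
    y ∈ pperp Q (W ⊔ Submodule.span F {x}) ↔
      y ∈ pperp Q W ∧ QuadraticMap.polar (⇑Q) x y = 0 := by
  constructor
  · intro h
    exact ⟨fun w hw => h w (Submodule.mem_sup_left hw),
      h x (Submodule.mem_sup_right (Submodule.mem_span_singleton_self x))⟩
  · rintro ⟨h1, h2⟩
    rw [mem_pperp]
    intro u hu
    obtain ⟨w, hw, z, hz, hu'⟩ := Submodule.mem_sup.1 hu
    obtain ⟨t, ht⟩ := Submodule.mem_span_singleton.1 hz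
    have h3 := (mem_pperp Q).1 h1 w hw
    rw [← hu', ← ht, QuadraticMap.polar_add_left, QuadraticMap.polar_smul_left, h2, h3]
    simp

open Classical in
lemma aux_scount_step [Fintype F] [Fintype V] (Q : QuadraticForm F V)
    {W : Submodule F V} {x : V} (hx : x ∈ pperp Q W) (hQx : Q x = 0) :
    Fintype.card F * scount Q W + Fintype.card F ^ finrank F (pperp Q (W ⊔ Submodule.span F {x}))
      = Fintype.card F * scount Q (W ⊔ Submodule.span F {x})
        + Fintype.card F ^ finrank F (pperp Q W) := by
  rw [← aux_card_sub, ← aux_card_sub]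
  have hxx : QuadraticMap.polar (⇑Q) x x = 0 := by simp [QuadraticMap.polar_self, hQx]
  set S := Finset.univ.filter
    (fun y : V => (y ∈ pperp Q W ∧ Q y = 0) ∧ ¬ QuadraticMap.polar (⇑Q) x y = 0) with hS
  set T := Finset.univ.filter
    (fun y : V => y ∈ pperp Q W ∧ ¬ QuadraticMap.polar (⇑Q) x y = 0) with hT
  have e1 : scount Q W = scount Q (W ⊔ Submodule.span F {x}) + S.card := by
    unfold scount
    rw [← Finset.card_filter_add_card_filter_not
      (s := Finset.univ.filter (fun y : V => y ∈ pperp Q W ∧ Q y = 0))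
      (fun y => QuadraticMap.polar (⇑Q) x y = 0), Finset.filter_filter, Finset.filter_filter]
    congr 2
    ext y
    simp only [Finset.mem_filter, mem_pperp_sup]
    tauto
  have e2 : (Finset.univ.filter (fun y : V => y ∈ pperp Q W)).card =
      (Finset.univ.filter (fun y : V => y ∈ pperp Q (W ⊔ Submodule.span F {x}))).card
        + T.card := by
    rw [← Finset.card_filter_add_card_filter_not
      (s := Finset.univ.filter (fun y : V => y ∈ pperp Q W))
      (fun y => QuadraticMap.polar (⇑Q) x y = 0), Finset.filter_filter, Finset.filter_filter]
    congr 2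
    ext y
    simp only [Finset.mem_filter, mem_pperp_sup]
  have hp : ∀ (y : V) (t : F), QuadraticMap.polar (⇑Q) x (y + t • x)
      = QuadraticMap.polar (⇑Q) x y := by
    intro y t
    rw [QuadraticMap.polar_add_right, QuadraticMap.polar_smul_right, hxx]; simp
  have hq : ∀ (y : V) (t : F), Q (y + t • x) = Q y + t * QuadraticMap.polar (⇑Q) x y := by
    intro y t
    rw [QuadraticMap.map_add Q, QuadraticMap.map_smul, hQx, QuadraticMap.polar_smul_right,
      QuadraticMap.polar_comm]
    simp
  have e3 : Fintype.card F * S.card = T.card := by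
    rw [← Finset.card_univ, ← Finset.card_product]
    refine Finset.card_nbij' (fun p => p.2 + p.1 • x)
      (fun y => (Q y / QuadraticMap.polar (⇑Q) x y,
        y + (-(Q y / QuadraticMap.polar (⇑Q) x y)) • x)) ?_ ?_ ?_ ?_
    · rintro ⟨t, y⟩ h
      simp only [hS, hT, Finset.coe_filter, Finset.coe_product, Set.mem_prod, Finset.mem_univ,
        true_and, Set.mem_setOf_eq, Finset.coe_univ, Set.mem_univ] at h ⊢
      rw [hp]
      exact ⟨Submodule.add_mem _ h.1.1 (Submodule.smul_mem _ _ hx), h.2⟩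
    · rintro y h
      simp only [hS, hT, Finset.coe_filter, Finset.coe_product, Set.mem_prod, Finset.mem_univ,
        true_and, Set.mem_setOf_eq, Finset.coe_univ, Set.mem_univ] at h ⊢
      rw [hp, hq]
      refine ⟨⟨Submodule.add_mem _ h.1 (Submodule.smul_mem _ _ hx), ?_⟩, h.2⟩
      have := h.2
      field_simp
      ring
    · rintro ⟨t, y⟩ h
      simp only [hS, Finset.coe_filter, Finset.coe_product, Set.mem_prod, Finset.mem_univ,
        true_and, Set.mem_setOf_eq, Finset.coe_univ, Set.mem_univ] at h
      have h2 := h.2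
      have : Q (y + t • x) / QuadraticMap.polar (⇑Q) x (y + t • x) = t := by
        rw [hp, hq, h.1.2]; field_simp; ring
      simp only [this]
      simp
    · rintro y h
      simp
  rw [e1, e2, ← e3]
  ring

lemma aux_scount [Fintype F] [Fintype V] [FiniteDimensional F V] (Q : QuadraticForm F V)
    (hQ : Nondeg Q) {n : ℕ} (hV : finrank F V = 2 * n + 2)
    (hw : HasWittIndex Q n) (j : ℕ) : ∀ {W : Submodule F V}, TotallySingular Q W →
    finrank F W + j = n →
    scount Q W + Fintype.card F ^ (n + 1) = Fintype.card F ^ n + Fintype.card F ^ (n + 1 + j) := by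
  induction j with
  | zero =>
    intro W hW hk
    classical
    have : scount Q W = Fintype.card F ^ n := by
      rw [← hk, add_zero, ← aux_card_sub]
      unfold scount
      congr 1
      ext x
      simp only [Finset.mem_filter, Finset.mem_univ, true_and]
      constructor
      · rintro ⟨h1, h2⟩
        by_contra hx
        have := hw.1 _ (aux_ts_sup Q hW h1 h2)
        rw [aux_finrank_sup hx] at this
        omega
      · intro h
        exact ⟨fun w hw => aux_polar_ts_s5 Q hW hw h, hW x h⟩
    rw [this, add_zero]
  | succ j ih =>
    intro W hW hk
    obtain ⟨x, hx, hQx, hxW⟩ := aux_extend Q hQ hw hW (by omega)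
    have hW' := aux_ts_sup Q hW hx hQx
    have hr := aux_finrank_sup hxW
    have h1 := ih hW' (by omega)
    have h2 := aux_scount_step Q hx hQx
    have h3 := aux_finrank_pperp Q hQ hW
    have h4 := aux_finrank_pperp Q hQ hW'
    rw [show finrank F (pperp Q W) = n + 1 + j + 1 + 1 by omega,
      show finrank F (pperp Q (W ⊔ Submodule.span F {x})) = n + 1 + j + 1 by omega] at h2
    have hpos : 0 < Fintype.card F := Fintype.card_pos
    apply Nat.eq_of_mul_eq_mul_left hpos
    generalize scount Q W = a at *
    generalize scount Q (W ⊔ Submodule.span F {x}) = b at *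
    generalize Fintype.card F = q at *
    zify at *
    rw [show n + 1 + (j+1) = n + 1 + j + 1 by ring]
    simp only [pow_succ _ (n + 1 + j), pow_succ _ (n+1+j+1)] at *
    linear_combination h2 + (q:ℤ) * h1

open Classical in
/-- generators through W -/
def gens [Fintype (Submodule F V)] (Q : QuadraticForm F V) (n : ℕ) (W : Submodule F V) :
    Finset (Submodule F V) :=
  Finset.univ.filter (fun g => IsGenerator Q n g ∧ W ≤ g)

/-- number of generators -/
def gnum (q : ℕ) : ℕ → ℕ
  | 0 => 1
  | j + 1 => (q ^ (j + 2) + 1) * gnum q j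

lemma gnum_pos (q j : ℕ) : 0 < gnum q j := by
  induction j with
  | zero => simp [gnum]
  | succ j ih => simp only [gnum]; positivity

lemma mem_pperp_of_le (Q : QuadraticForm F V) {W g : Submodule F V}
    (hg : TotallySingular Q g) (h : W ≤ g) : g ≤ pperp Q W :=
  fun _ hx _ hw => aux_polar_ts_s5 Q hg (h hw) hx

lemma aux_gens [Fintype F] [Fintype V] [Fintype (Submodule F V)] [FiniteDimensional F V]
    (Q : QuadraticForm F V)
    (hQ : Nondeg Q) {n : ℕ} (hV : finrank F V = 2 * n + 2)
    (hw : HasWittIndex Q n) (j : ℕ) : ∀ {W : Submodule F V}, TotallySingular Q W →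
    finrank F W + j = n → (gens Q n W).card = gnum (Fintype.card F) j := by
  classical
  induction j with
  | zero =>
    intro W hW hk
    rw [gnum, Finset.card_eq_one]
    refine ⟨W, ?_⟩
    ext g
    simp only [gens, Finset.mem_filter, Finset.mem_univ, true_and, Finset.mem_singleton]
    constructor
    · rintro ⟨⟨h1, h2⟩, h3⟩
      exact (Submodule.eq_of_le_of_finrank_eq h3 (by omega)).symm
    · rintro rfl
      exact ⟨⟨hW, by omega⟩, le_rfl⟩
  | succ j ih =>
    intro W hW hk
    have hs := aux_scount Q hQ hV hw (j + 1) hW hk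
    set S := Finset.univ.filter (fun x : V => (x ∈ pperp Q W ∧ Q x = 0) ∧ x ∉ W) with hS
    have hsS : scount Q W = Fintype.card F ^ finrank F W + S.card := by
      unfold scount
      rw [← aux_card_sub, ← Finset.card_filter_add_card_filter_not
        (s := Finset.univ.filter (fun y : V => y ∈ pperp Q W ∧ Q y = 0))
        (fun y => y ∈ W), Finset.filter_filter, Finset.filter_filter]
      congr 2
      ext y
      simp only [Finset.mem_filter, Finset.mem_univ, true_and]
      exact ⟨fun h => h.2, fun h => ⟨⟨mem_pperp_of_le Q hW le_rfl h, hW y h⟩, h⟩⟩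
    have hdc := Finset.sum_card_bipartiteAbove_eq_sum_card_bipartiteBelow
      (s := S) (t := gens Q n W) (fun x g => x ∈ g)
    have hA : ∀ x ∈ S, ((gens Q n W).bipartiteAbove (fun x g => x ∈ g) x).card
        = gnum (Fintype.card F) j := by
      intro x hx
      simp only [hS, Finset.mem_filter, Finset.mem_univ, true_and] at hx
      rw [← ih (aux_ts_sup Q hW hx.1.1 hx.1.2) (by rw [aux_finrank_sup hx.2]; omega)]
      congr 1
      ext g
      simp only [gens, Finset.bipartiteAbove, Finset.mem_filter, Finset.mem_univ, true_and,
        sup_le_iff, Submodule.span_singleton_le_iff_mem]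
      tauto
    have hB : ∀ g ∈ gens Q n W, (S.bipartiteBelow (fun x g => x ∈ g) g).card
        + Fintype.card F ^ finrank F W = Fintype.card F ^ n := by
      intro g hg
      simp only [gens, Finset.mem_filter, Finset.mem_univ, true_and] at hg
      obtain ⟨⟨hg1, hg2⟩, hg3⟩ := hg
      rw [← hg2, ← aux_card_sub, ← aux_card_sub, ← Finset.card_filter_add_card_filter_not
        (s := Finset.univ.filter (fun y : V => y ∈ g))
        (fun y => y ∈ W), Finset.filter_filter, Finset.filter_filter, add_comm]
      congr 2
      · ext y
        simp only [Finset.mem_filter, Finset.mem_univ, true_and]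
        exact ⟨fun h => ⟨hg3 h, h⟩, fun h => h.2⟩
      · ext y
        simp only [hS, Finset.bipartiteBelow, Finset.mem_filter, Finset.mem_univ, true_and]
        exact ⟨fun h => ⟨h.2, h.1.2⟩,
          fun h => ⟨⟨⟨mem_pperp_of_le Q hg1 hg3 h.1, hg1 y h.1⟩, h.2⟩, h.1⟩⟩
    rw [Finset.sum_congr rfl hA, Finset.sum_const, smul_eq_mul] at hdc
    have hB2 : ∑ g ∈ gens Q n W, ((S.bipartiteBelow (fun x g => x ∈ g) g).card
        + Fintype.card F ^ finrank F W) = (gens Q n W).card * Fintype.card F ^ n := by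
      rw [Finset.sum_congr rfl hB, Finset.sum_const, smul_eq_mul]
    rw [Finset.sum_add_distrib, ← hdc, Finset.sum_const, smul_eq_mul] at hB2
    rw [hsS] at hs
    rw [gnum]
    have hq1 : 1 < Fintype.card F := Fintype.one_lt_card
    generalize S.card = s at *
    generalize (gens Q n W).card = c at *
    generalize gnum (Fintype.card F) j = d at *
    generalize Fintype.card F = q at *
    generalize finrank F W = k at *
    subst hk
    have hlt : q ^ k < q ^ (k + (j + 1)) := Nat.pow_lt_pow_right hq1 (by omega)
    zify at *
    have hne : (q:ℤ) ^ (k + (j + 1)) - q ^ k ≠ 0 := by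
      intro h; linarith
    apply mul_left_cancel₀ hne
    have hs' : (s:ℤ) = (q ^ (k + (j + 1)) - q ^ k) * (q ^ (j + 2) + 1) := by
      have : (s:ℤ) = q ^ (k + (j + 1)) + q ^ (k + (j + 1) + 1 + (j + 1))
        - q ^ (k + (j + 1) + 1) - q ^ k := by linarith
      rw [this]; ring
    rw [hs'] at hB2
    linear_combination -hB2

/-- If `P = ⟨v⟩` is a point of a relative `m`-ovoid `R`, then `v^⊥` contains exactly
`m(qⁿ + 1) − qⁿ` points of `R`. -/
theorem statement_5
    (q n : ℕ) [Fintype F] (hq : Fintype.card F = q) (hn : 2 ≤ n)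
    (hV : finrank F V = 2 * n + 2)
    (Q : QuadraticForm F V) (hQnd : Nondeg Q) (hQw : HasWittIndex Q n)
    (H : Submodule F V) (hH : finrank F H = 2 * n + 1) (hHnd : NondegOn Q H)
    (m : ℕ) (R : Set (Submodule F V)) (hR : IsRelativeMOvoid Q n H m R)
    (v : V) (hv0 : v ≠ 0) (hvQ : Q v = 0) (hvR : Submodule.span F {v} ∈ R) :
    {P ∈ R | P ≤ vperp Q v}.ncard = m * (q ^ n + 1) - q ^ n := by
  classical
  have : FiniteDimensional F V := Module.finite_of_finrank_pos (by omega)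
  have : Finite V := Module.finite_of_finite F
  have : Fintype V := Fintype.ofFinite V
  have : Finite (Submodule F V) :=
    Finite.of_injective (fun W : Submodule F V => (W : Set V)) SetLike.coe_injective
  have : Fintype (Submodule F V) := Fintype.ofFinite _
  obtain ⟨hR1, hR2⟩ := hR
  set p := Submodule.span F {v} with hp
  have hpts : TotallySingular Q p := by
    intro x hx
    obtain ⟨t, rfl⟩ := Submodule.mem_span_singleton.1 hx
    rw [QuadraticMap.map_smul, hvQ, smul_zero]
  have hp1 : finrank F p = 1 := finrank_span_singleton hv0
  obtain ⟨j, rfl⟩ : ∃ j, n = j + 2 := ⟨n - 2, by omega⟩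
  have hG := aux_gens Q hQnd hV hQw (j + 1) hpts (by omega)
  have hvp : ∀ P, P ≤ vperp Q v ↔ P ≤ pperp Q p := by
    intro P
    refine forall_congr' fun x => forall_congr' fun _ => ?_
    constructor
    · intro h w hw
      obtain ⟨t, rfl⟩ := Submodule.mem_span_singleton.1 hw
      change QuadraticMap.polar (⇑Q) (t • v) x = 0
      rw [QuadraticMap.polar_smul_left, show QuadraticMap.polar (⇑Q) v x = 0 from h, smul_zero]
    · intro h
      exact h v (Submodule.mem_span_singleton_self v)
  set S := Finset.univ.filter (fun P => (P ∈ R ∧ P ≤ vperp Q v) ∧ P ≠ p) with hS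
  have hpp : p ≤ vperp Q v := (hvp p).2 (mem_pperp_of_le Q hpts le_rfl)
  have hcard : {P ∈ R | P ≤ vperp Q v}.ncard = S.card + 1 := by
    have : {P ∈ R | P ≤ vperp Q v} = ((insert p S : Finset _) : Set (Submodule F V)) := by
      ext P
      simp only [hS, Set.mem_setOf_eq, Finset.coe_insert, Finset.coe_filter, Finset.mem_univ,
        true_and, Set.mem_insert_iff]
      constructor
      · intro h
        by_cases hP : P = p
        · exact Or.inl hP
        · exact Or.inr ⟨h, hP⟩
      · rintro (rfl | h)
        · exact ⟨hvR, hpp⟩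
        · exact h.1
    rw [this, Set.ncard_coe_finset, Finset.card_insert_of_notMem (by simp [hS])]
  have hdc := Finset.sum_card_bipartiteAbove_eq_sum_card_bipartiteBelow
      (s := S) (t := gens Q (j + 2) p) (fun x g => x ≤ g)
  have hA : ∀ P ∈ S, ((gens Q (j + 2) p).bipartiteAbove (fun x g => x ≤ g) P).card
      = gnum (Fintype.card F) j := by
    intro P hP
    simp only [hS, Finset.mem_filter, Finset.mem_univ, true_and] at hP
    obtain ⟨⟨hPR, hPv⟩, hPp⟩ := hP
    obtain ⟨⟨w, hw0, hwQ, rfl⟩, -⟩ := hR1 P hPR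
    have hwp : w ∉ p := by
      intro h
      apply hPp
      refine Submodule.eq_of_le_of_finrank_eq ?_ ?_
      · rwa [Submodule.span_singleton_le_iff_mem]
      · rw [hp1, finrank_span_singleton hw0]
    have hwv := (hvp _).1 hPv (Submodule.mem_span_singleton_self w)
    rw [← aux_gens Q hQnd hV hQw j (aux_ts_sup Q hpts hwv hwQ)
      (by rw [aux_finrank_sup hwp]; omega)]
    congr 1
    ext g
    simp only [gens, Finset.bipartiteAbove, Finset.mem_filter, Finset.mem_univ, true_and,
        sup_le_iff]
    tauto
  have hB : ∀ g ∈ gens Q (j + 2) p, (S.bipartiteBelow (fun x g => x ≤ g) g).card + 1 = m := by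
    intro g hg
    simp only [gens, Finset.mem_filter, Finset.mem_univ, true_and] at hg
    rw [← hR2 g hg.1 (fun h => (hR1 p hvR).2 (hg.2.trans h))]
    have : {P ∈ R | P ≤ g} = ((insert p (S.bipartiteBelow (fun x g => x ≤ g) g) : Finset _) :
        Set (Submodule F V)) := by
      ext P
      simp only [hS, Finset.bipartiteBelow, Set.mem_setOf_eq, Finset.coe_insert,
        Finset.coe_filter, Finset.mem_filter, Finset.mem_univ,
        true_and, Set.mem_insert_iff]
      constructor
      · intro h
        by_cases hP : P = p
        · exact Or.inl hP
        · exact Or.inr ⟨⟨⟨h.1, (hvp P).2 (h.2.trans (mem_pperp_of_le Q hg.1.1 hg.2))⟩, hP⟩, h.2⟩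
      · rintro (rfl | h)
        · exact ⟨hvR, hg.2⟩
        · exact ⟨h.1.1.1, h.2⟩
    rw [this, Set.ncard_coe_finset, Finset.card_insert_of_notMem
      (by simp [hS, Finset.bipartiteBelow])]
  obtain ⟨g, hg⟩ : (gens Q (j + 2) p).Nonempty := by
    rw [← Finset.card_pos, hG]; exact gnum_pos _ _
  obtain ⟨m, rfl⟩ : ∃ m', m = m' + 1 := ⟨_, (hB g hg).symm⟩
  rw [Finset.sum_congr rfl hA, Finset.sum_const, smul_eq_mul,
    Finset.sum_congr rfl (fun g hg => Nat.add_right_cancel (hB g hg)), Finset.sum_const,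
    smul_eq_mul, hG, gnum, hq] at hdc
  have hfin : S.card = m * (q ^ (j + 2) + 1) := by
    apply Nat.eq_of_mul_eq_mul_right (gnum_pos q j)
    rw [hdc]; ring
  rw [hcard, hfin]
  apply Nat.eq_sub_of_add_eq
  ring
end
end

section
/- If R is a relative m-ovoid of Q⁻(2n+1,q) with respect to 𝒬 and P = ⟨v⟩ is a singular point not contained in H with P ∉ R, then the number of points of R contained in the hyperplane v^⊥ = {w ∈ V : B(v,w) = 0} equals m(qⁿ + 1). -/
noncomputable section

open Module

variable {F V : Type*} [Field F] [AddCommGroup V] [Module F V]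

/-- Orthogonal subspace. -/
def pp (Q : QuadraticForm F V) (W : Submodule F V) : Submodule F V :=
  LinearMap.BilinForm.orthogonal Q.polarBilin W

theorem mem_pp {Q : QuadraticForm F V} {W : Submodule F V} {x : V} :
    x ∈ pp Q W ↔ ∀ w ∈ W, QuadraticMap.polar (⇑Q) w x = 0 := by
  unfold pp
  rw [LinearMap.BilinForm.mem_orthogonal_iff]
  rfl

theorem TotallySingular.polar {Q : QuadraticForm F V} {W : Submodule F V}
    (h : TotallySingular Q W) {x y : V} (hx : x ∈ W) (hy : y ∈ W) :
    QuadraticMap.polar (⇑Q) x y = 0 := by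
  unfold QuadraticMap.polar
  rw [h _ (W.add_mem hx hy), h _ hx, h _ hy]; simp

theorem TotallySingular.mono {Q : QuadraticForm F V} {W U : Submodule F V}
    (h : TotallySingular Q W) (hU : U ≤ W) : TotallySingular Q U := fun x hx => h x (hU hx)

theorem TotallySingular.le_pp {Q : QuadraticForm F V} {W U : Submodule F V}
    (h : TotallySingular Q W) (hU : U ≤ W) : W ≤ pp Q U := fun _ hx =>
  mem_pp.2 fun _ hw => h.polar (hU hw) hx

theorem TotallySingular.sup {Q : QuadraticForm F V} {W U : Submodule F V}
    (h : TotallySingular Q W) (hU : TotallySingular Q U) (hWU : U ≤ pp Q W) :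
    TotallySingular Q (W ⊔ U) := by
  intro x hx
  obtain ⟨a, ha, b, hb, rfl⟩ := Submodule.mem_sup.1 hx
  rw [QuadraticMap.map_add Q, h a ha, hU b hb, mem_pp.1 (hWU hb) a ha]; simp

theorem ts_span {Q : QuadraticForm F V} {x : V} (h : Q x = 0) :
    TotallySingular Q (Submodule.span F {x}) := by
  intro y hy
  obtain ⟨c, rfl⟩ := Submodule.mem_span_singleton.1 hy
  rw [QuadraticMap.map_smul, h]; simp

theorem TotallySingular.sup_span {Q : QuadraticForm F V} {W : Submodule F V} {x : V}
    (h : TotallySingular Q W) (hx : Q x = 0) (hxW : x ∈ pp Q W) :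
    TotallySingular Q (W ⊔ Submodule.span F {x}) :=
  h.sup (ts_span hx) (by rwa [Submodule.span_singleton_le_iff_mem])

theorem finrank_pp [FiniteDimensional F V] {Q : QuadraticForm F V} (hQ : Nondeg Q)
    {W : Submodule F V} (h : TotallySingular Q W) :
    finrank F W + finrank F (pp Q W) = finrank F V := by
  have hr : (Q.polarBilin : LinearMap.BilinForm F V).IsRefl := by
    intro x y hxy
    simp only [QuadraticMap.polarBilin_apply_apply] at *
    rw [QuadraticMap.polar_comm, hxy]
  have := LinearMap.BilinForm.finrank_add_finrank_orthogonal hr W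
  unfold pp
  rw [this]
  have h0 : W ⊓ LinearMap.BilinForm.orthogonal Q.polarBilin ⊤ = ⊥ := by
    rw [eq_bot_iff]
    rintro x ⟨hx, hx'⟩
    refine (Submodule.mem_bot F).2 (hQ x (h x hx) fun w => ?_)
    rw [QuadraticMap.polar_comm]
    exact mem_pp.1 hx' w trivial
  rw [h0]; simp

theorem exists_gen [FiniteDimensional F V] {Q : QuadraticForm F V} (hQ : Nondeg Q) {n : ℕ}
    (hw : HasWittIndex Q n) {W : Submodule F V} (h : TotallySingular Q W) :
    ∃ g, W ≤ g ∧ IsGenerator Q n g := by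
  obtain ⟨g, hg, hgn⟩ := hw.2
  have ts : TotallySingular Q (W ⊔ (g ⊓ pp Q W)) :=
    h.sup (hg.mono inf_le_left) inf_le_right
  refine ⟨_, le_sup_left, ts, le_antisymm (hw.1 _ ts) ?_⟩
  have e1 := Submodule.finrank_sup_add_finrank_inf_eq W (g ⊓ pp Q W)
  have e2 := Submodule.finrank_sup_add_finrank_inf_eq g (pp Q W)
  have e3 := finrank_pp hQ h
  have e4 := finrank_pp hQ (h.mono (inf_le_right : g ⊓ W ≤ W))
  have e5 : finrank F ↥(g ⊔ pp Q W) ≤ finrank F ↥(pp Q (g ⊓ W)) :=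
    Submodule.finrank_mono (sup_le (hg.le_pp inf_le_left)
      (LinearMap.BilinForm.orthogonal_le inf_le_right))
  have e6 : finrank F ↥(W ⊓ (g ⊓ pp Q W)) ≤ finrank F ↥(g ⊓ W) :=
    Submodule.finrank_mono (by
      refine le_inf (inf_le_right.trans inf_le_left) inf_le_left)
  omega

theorem card_sub [Finite F] [FiniteDimensional F V] (W : Submodule F V) :
    (W : Set V).ncard = Nat.card F ^ finrank F W := by
  rw [← Module.natCard_eq_pow_finrank, ← Nat.card_coe_set_eq]; rfl

theorem card_hyp [Finite F] [FiniteDimensional F V] {Q : QuadraticForm F V}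
    {W : Submodule F V} {u : V} (hu : u ∈ pp Q W) (hu0 : Q u = 0) :
    {x | x ∈ pp Q W ∧ QuadraticMap.polar Q u x ≠ 0 ∧ Q x = 0}.ncard * Nat.card F =
      {x | x ∈ pp Q W ∧ QuadraticMap.polar Q u x ≠ 0}.ncard := by
  have huu : ∀ t : F, QuadraticMap.polar Q u (t • u) = 0 := by
    intro t
    rw [QuadraticMap.polar_smul_right, QuadraticMap.polar_self, hu0]; simp
  have hq : ∀ (x : V) (t : F), Q (x + t • u) = Q x + t * QuadraticMap.polar Q u x := by
    intro x t
    rw [QuadraticMap.map_add Q, QuadraticMap.map_smul, hu0, QuadraticMap.polar_smul_right,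
      QuadraticMap.polar_comm]; simp
  rw [← Nat.card_coe_set_eq, ← Nat.card_coe_set_eq, ← Nat.card_prod]
  refine Nat.card_congr (Equiv.ofBijective (fun p => ⟨p.1.1 + p.2 • u, ?_, ?_⟩) ⟨?_, ?_⟩)
  · exact Submodule.add_mem _ p.1.2.1 (Submodule.smul_mem _ _ hu)
  · rw [QuadraticMap.polar_add_right, huu, add_zero]; exact p.1.2.2.1
  · rintro ⟨⟨x, hx, hx1, hx2⟩, t⟩ ⟨⟨y, hy, hy1, hy2⟩, s⟩ hxy
    simp only [Subtype.mk.injEq] at hxy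
    have hx' : x = y + (s - t) • u := by
      rw [sub_smul, ← add_sub_assoc, ← hxy]; simp
    have h3 := hq y (s - t)
    rw [← hx', hx2, hy2, zero_add, eq_comm, mul_eq_zero, or_iff_left hy1, sub_eq_zero] at h3
    subst h3
    simp at hx'
    simp [hx']
  · rintro ⟨y, hy, hy1⟩
    set c := QuadraticMap.polar Q u y with hc
    refine ⟨⟨⟨y + (-(Q y / c)) • u, ?_, ?_, ?_⟩, Q y / c⟩, ?_⟩
    · exact Submodule.add_mem _ hy (Submodule.smul_mem _ _ hu)
    · rw [QuadraticMap.polar_add_right, huu, add_zero]; exact hy1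
    · rw [hq, ← hc]; field_simp; ring
    · simp

theorem mem_pp_sup {Q : QuadraticForm F V} {W : Submodule F V} {u x : V} :
    x ∈ pp Q (W ⊔ Submodule.span F {u}) ↔ x ∈ pp Q W ∧ QuadraticMap.polar Q u x = 0 := by
  constructor
  · intro h
    exact ⟨mem_pp.2 fun w hw => mem_pp.1 h w (Submodule.mem_sup_left hw),
      mem_pp.1 h u (Submodule.mem_sup_right (Submodule.mem_span_singleton_self u))⟩
  · rintro ⟨h1, h2⟩
    refine mem_pp.2 fun w hw => ?_
    obtain ⟨a, ha, b, hb, rfl⟩ := Submodule.mem_sup.1 hw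
    obtain ⟨c, rfl⟩ := Submodule.mem_span_singleton.1 hb
    rw [QuadraticMap.polar_add_left, QuadraticMap.polar_smul_left, h2, mem_pp.1 h1 a ha]; simp

theorem card_sing [Finite F] [FiniteDimensional F V] {Q : QuadraticForm F V} (hQ : Nondeg Q)
    {n : ℕ} (hV : finrank F V = 2 * n + 2) (hw : HasWittIndex Q n) (r : ℕ) :
    ∀ W : Submodule F V, TotallySingular Q W → finrank F W + r = n →
    {x | x ∈ pp Q W ∧ Q x = 0}.ncard + Nat.card F ^ (n + 1) =
      Nat.card F ^ n + Nat.card F ^ (n + r + 1) := by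
  have : Finite V := Module.finite_of_finite F
  induction r with
  | zero =>
    intro W h hW
    have : {x | x ∈ pp Q W ∧ Q x = 0} = (W : Set V) := by
      ext x
      constructor
      · rintro ⟨h1, h2⟩
        by_contra hx
        have := hw.1 _ (h.sup_span h2 h1)
        rw [Submodule.finrank_sup_span_singleton hx] at this
        omega
      · intro hx
        exact ⟨h.le_pp le_rfl hx, h x hx⟩
    rw [this, card_sub]
    simp at hW
    simp [hW]
  | succ r ih =>
    intro W h hW
    obtain ⟨g, hWg, hg, hgn⟩ := exists_gen hQ hw h
    obtain ⟨u, hug, huW⟩ : ∃ u ∈ g, u ∉ W := by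
      by_contra! hc
      have := Submodule.finrank_mono (show g ≤ W from hc)
      omega
    have hu : u ∈ pp Q W := hg.le_pp hWg hug
    have tU := h.sup_span (hg u hug) hu
    have dU := Submodule.finrank_sup_span_singleton huW
    have i1 := ih _ tU (by omega)
    have c := card_hyp hu (hg u hug)
    have p1 := finrank_pp hQ h
    have p2 := finrank_pp hQ tU
    have s1 : {x | x ∈ pp Q W ∧ Q x = 0}.ncard =
        {x | x ∈ pp Q (W ⊔ Submodule.span F {u}) ∧ Q x = 0}.ncard +
        {x | x ∈ pp Q W ∧ QuadraticMap.polar Q u x ≠ 0 ∧ Q x = 0}.ncard := by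
      rw [← Set.ncard_union_eq _ (Set.toFinite _) (Set.toFinite _)]
      · congr 1; ext x
        simp only [Set.mem_ofPred_eq, Set.mem_union, mem_pp_sup]; tauto
      · rw [Set.disjoint_left]; rintro x ⟨h1, _⟩ ⟨_, h2, _⟩
        exact h2 (mem_pp_sup.1 h1).2
    have s2 : (pp Q W : Set V).ncard =
        (pp Q (W ⊔ Submodule.span F {u}) : Set V).ncard +
        {x | x ∈ pp Q W ∧ QuadraticMap.polar Q u x ≠ 0}.ncard := by
      rw [← Set.ncard_union_eq _ (Set.toFinite _) (Set.toFinite _)]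
      · congr 1; ext x
        simp only [Set.mem_ofPred_eq, Set.mem_union, SetLike.mem_coe, mem_pp_sup]; tauto
      · rw [Set.disjoint_left]; rintro x h1 ⟨_, h2⟩
        exact h2 (mem_pp_sup.1 h1).2
    rw [card_sub, card_sub, ← c] at s2
    have f1 : finrank F (pp Q W) = (n + r + 2) + 1 := by omega
    have f2 : finrank F (pp Q (W ⊔ Submodule.span F {u})) = n + r + 1 + 1 := by omega
    rw [f1, f2] at s2
    have hqp : 0 < Nat.card F := Nat.card_pos
    rw [pow_succ, pow_succ (Nat.card F) (n + r + 1), ← add_mul] at s2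
    have s3 := Nat.eq_of_mul_eq_mul_right hqp s2
    rw [← pow_succ] at s3
    rw [s1]
    have : n + (r + 1) + 1 = n + r + 2 := by ring
    rw [this]
    linarith

/-- Number of generators. -/
def ff (q : ℕ) : ℕ → ℕ
  | 0 => 1
  | r + 1 => ff q r * (q ^ (r + 2) + 1)

theorem ff_pos (q r : ℕ) : 0 < ff q r := by
  induction r with
  | zero => simp [ff]
  | succ r ih => simp only [ff]; positivity

open Classical in
theorem dcount {α β : Type*} [Finite α] [Finite β] (r : α → β → Prop) (s : Set α) (t : Set β)
    (a b : ℕ) (ha : ∀ x ∈ s, {y | y ∈ t ∧ r x y}.ncard = a)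
    (hb : ∀ y ∈ t, {x | x ∈ s ∧ r x y}.ncard = b) : s.ncard * a = t.ncard * b := by
  have := Fintype.ofFinite α
  have := Fintype.ofFinite β
  have h := Finset.sum_card_bipartiteAbove_eq_sum_card_bipartiteBelow r
    (s := s.toFinset) (t := t.toFinset)
  rw [Finset.sum_const_nat (m := a), Finset.sum_const_nat (m := b)] at h
  · rwa [← Set.ncard_eq_toFinset_card', ← Set.ncard_eq_toFinset_card'] at h
  · intro y hy
    rw [← hb y (by simpa using hy), Set.ncard_eq_toFinset_card']
    congr 1; ext x; simp [Finset.bipartiteBelow]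
  · intro y hy
    rw [← ha y (by simpa using hy), Set.ncard_eq_toFinset_card']
    congr 1; ext x; simp [Finset.bipartiteAbove]

theorem card_gen [Finite F] [FiniteDimensional F V] {Q : QuadraticForm F V} (hQ : Nondeg Q)
    {n : ℕ} (hV : finrank F V = 2 * n + 2) (hw : HasWittIndex Q n) (r : ℕ) :
    ∀ W : Submodule F V, TotallySingular Q W → finrank F W + r = n →
    {g | IsGenerator Q n g ∧ W ≤ g}.ncard = ff (Nat.card F) r := by
  have : Finite V := Module.finite_of_finite F
  have : Finite (Submodule F V) := Finite.of_injective _ SetLike.coe_injective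
  induction r with
  | zero =>
    intro W h hW
    rw [ff, Set.ncard_eq_one]
    refine ⟨W, ?_⟩
    ext g
    constructor
    · rintro ⟨⟨h1, h2⟩, h3⟩
      exact (Submodule.eq_of_le_of_finrank_eq h3 (by omega)).symm
    · rintro rfl
      exact ⟨⟨h, by omega⟩, le_rfl⟩
  | succ r ih =>
    intro W h hW
    have key := dcount (fun (g : Submodule F V) (x : V) => x ∈ g)
      {g | IsGenerator Q n g ∧ W ≤ g} {x | (x ∈ pp Q W ∧ Q x = 0) ∧ x ∉ W}
      (Nat.card F ^ n - Nat.card F ^ finrank F W) (ff (Nat.card F) r) ?_ ?_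
    · have c := card_sing hQ hV hw (r + 1) W h hW
      have d : {x | (x ∈ pp Q W ∧ Q x = 0) ∧ x ∉ W}.ncard + Nat.card F ^ finrank F W =
          {x | x ∈ pp Q W ∧ Q x = 0}.ncard := by
        rw [← card_sub, ← Set.ncard_sdiff_add_ncard_of_subset (s := (W : Set V))
          (t := {x | x ∈ pp Q W ∧ Q x = 0})]
        · rfl
        · intro x hx
          exact ⟨h.le_pp le_rfl hx, h x hx⟩
      rw [ff]
      generalize {x | (x ∈ pp Q W ∧ Q x = 0) ∧ x ∉ W}.ncard = A at *
      generalize {g | IsGenerator Q n g ∧ W ≤ g}.ncard = N at *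
      generalize {x | x ∈ pp Q W ∧ Q x = 0}.ncard = S at *
      generalize finrank F W = k at *
      have hq : 1 < Nat.card F := Finite.one_lt_card
      generalize Nat.card F = q at *
      subst hW
      subst d
      have hlt : q ^ k < q ^ (k + (r + 1)) := Nat.pow_lt_pow_right hq (by omega)
      obtain ⟨D, hD⟩ := Nat.exists_eq_add_of_lt hlt
      have hA : A = (q ^ (k + (r + 1)) - q ^ k) * (q ^ (r + 2) + 1) := by
        zify [hlt.le] at c ⊢
        linear_combination c
      rw [hA] at key
      have hpos : 0 < q ^ (k + (r + 1)) - q ^ k := by omega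
      apply Nat.eq_of_mul_eq_mul_right hpos
      rw [key]; ring
    · rintro g ⟨⟨h1, h2⟩, h3⟩
      rw [← h2, ← card_sub, ← card_sub, ← Set.ncard_sdiff h3]
      congr 1; ext x
      simp only [Set.mem_ofPred_eq, Set.mem_sdiff, SetLike.mem_coe]
      constructor
      · tauto
      · rintro ⟨h4, h5⟩
        exact ⟨⟨⟨h1.le_pp h3 h4, h1 x h4⟩, h5⟩, h4⟩
    · rintro x ⟨⟨h1, h2⟩, h3⟩
      rw [← ih _ (h.sup_span h2 h1) (by rw [Submodule.finrank_sup_span_singleton h3]; omega)]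
      congr 1; ext g
      simp only [Set.mem_ofPred_eq, sup_le_iff, Submodule.span_singleton_le_iff_mem]; tauto

/-- If `P = ⟨v⟩` is a singular point not in `H` and not in the relative `m`-ovoid `R`,
then `v^⊥` contains exactly `m(qⁿ + 1)` points of `R`. -/
theorem statement_6
    (q n : ℕ) [Fintype F] (hq : Fintype.card F = q) (hn : 2 ≤ n)
    (hV : finrank F V = 2 * n + 2)
    (Q : QuadraticForm F V) (hQnd : Nondeg Q) (hQw : HasWittIndex Q n)
    (H : Submodule F V) (hH : finrank F H = 2 * n + 1) (hHnd : NondegOn Q H)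
    (m : ℕ) (R : Set (Submodule F V)) (hR : IsRelativeMOvoid Q n H m R)
    (v : V) (hv0 : v ≠ 0) (hvQ : Q v = 0) (hvH : v ∉ H)
    (hvR : Submodule.span F {v} ∉ R) :
    {P ∈ R | P ≤ vperp Q v}.ncard = m * (q ^ n + 1) := by
  have : FiniteDimensional F V := FiniteDimensional.of_finrank_pos (by omega)
  have : Finite V := Module.finite_of_finite F
  have : Finite (Submodule F V) := Finite.of_injective _ SetLike.coe_injective
  have hq' : Nat.card F = q := by rw [Nat.card_eq_fintype_card, hq]
  obtain ⟨k, rfl⟩ : ∃ k, n = k + 2 := ⟨n - 2, by omega⟩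
  have tv := ts_span hvQ (F := F)
  have dv := finrank_span_singleton (K := F) hv0
  have cv := card_gen hQnd hV hQw (k + 1) _ tv (by omega)
  have key := dcount (fun (g P : Submodule F V) => P ≤ g)
    {g | IsGenerator Q (k + 2) g ∧ Submodule.span F {v} ≤ g} {P ∈ R | P ≤ vperp Q v}
    m (ff q k) ?_ ?_
  · rw [cv, hq', ff] at key
    apply Nat.eq_of_mul_eq_mul_right (ff_pos q k)
    rw [← key]; ring
  · rintro g ⟨hg, hvg⟩
    rw [Submodule.span_singleton_le_iff_mem] at hvg
    rw [← hR.2 g hg (fun hc => hvH (hc hvg))]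
    congr 1; ext P
    simp only [Set.mem_ofPred_eq]
    constructor
    · tauto
    · rintro ⟨h1, h2⟩
      exact ⟨⟨h1, fun x hx => hg.1.polar hvg (h2 hx)⟩, h2⟩
  · rintro P ⟨hP, hPv⟩
    obtain ⟨⟨x, hx0, hxQ, rfl⟩, -⟩ := hR.1 P hP
    rw [Submodule.span_singleton_le_iff_mem] at hPv
    have hxv : x ∉ Submodule.span F {v} := by
      intro hc
      have : Submodule.span F {x} = Submodule.span F {v} :=
        Submodule.eq_of_le_of_finrank_eq (by rwa [Submodule.span_singleton_le_iff_mem])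
          (by rw [dv, finrank_span_singleton hx0])
      exact hvR (this ▸ hP)
    have hxp : x ∈ pp Q (Submodule.span F {v}) := by
      refine mem_pp.2 fun w hw => ?_
      obtain ⟨c, rfl⟩ := Submodule.mem_span_singleton.1 hw
      have : QuadraticMap.polar Q v x = 0 := hPv
      rw [QuadraticMap.polar_smul_left, this]; simp
    rw [← hq', ← card_gen hQnd hV hQw k _ (tv.sup_span hxQ hxp)
      (by rw [Submodule.finrank_sup_span_singleton hxv]; omega)]
    congr 1; ext g
    simp only [Set.mem_ofPred_eq, sup_le_iff]; tauto
end
end
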